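/- arXiv:2605.20527 — 3 statements merged into one kernel-verified Lean document; each statement's English description precedes it below -/
import Mathlib

section
/- Fix an integer d ≥ 1. There exists a constant C_d > 0 such that every U in the Bargmann–Fock space F²(ℂ^d) with U(0) = 0 satisfies ‖U‖_{F_d}² ≤ C_d² ‖ρ ∘ U‖_{F_d}². -/
open MeasureTheory

/-- The Gaussian (Fock) norm on `ℂ^d`:
`‖F‖_{F_d}² = (1/π^d) ∫_{ℂ^d} ‖F(z)‖² e^{−Σ_q |z_q|²} dm(z)`. -/
noncomputable def gammaNormD (d : ℕ) {E : Type*} [NormedAddCommGroup E]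
    (F : (Fin d → ℂ) → E) : ℝ :=
  Real.sqrt ((1 / Real.pi ^ d) *
    ∫ z : Fin d → ℂ, ‖F z‖ ^ 2 * Real.exp (-∑ q, ‖z q‖ ^ 2))

/-- The defect function `ρ(w) = ||1+w| − 1|`. -/
noncomputable def ρ (w : ℂ) : ℝ := |‖1 + w‖ - 1|

section Helpers

open Metric Set
open scoped ENNReal

lemma cs_lint {α : Type*} [MeasurableSpace α] (μ : Measure α) (f g : α → ℝ≥0∞)
    (hf : AEMeasurable f μ) (hg : AEMeasurable g μ) :
    (∫⁻ x, f x * g x ∂μ) ^ 2 ≤ (∫⁻ x, f x ^ 2 ∂μ) * ∫⁻ x, g x ^ 2 ∂μ := by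
  have h := ENNReal.lintegral_mul_le_Lp_mul_Lq μ (Real.HolderConjugate.two_two) hf hg
  simp only [Pi.mul_apply, ENNReal.rpow_two] at h
  calc (∫⁻ x, f x * g x ∂μ) ^ 2 ≤ ((∫⁻ x, f x ^ 2 ∂μ) ^ (1 / 2 : ℝ) * (∫⁻ x, g x ^ 2 ∂μ) ^ (1 / 2 : ℝ)) ^ 2 := by
        gcongr
    _ = _ := by
      rw [mul_pow, ← ENNReal.rpow_natCast, ← ENNReal.rpow_natCast, ← ENNReal.rpow_mul,
        ← ENNReal.rpow_mul]
      norm_num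

lemma rot_lint (F G : ℂ → ℝ≥0∞) (hF : Measurable F) (hG : Measurable G)
    (h : ∀ z, G z * ENNReal.ofReal (2 * Real.pi) ≤
      ∫⁻ θ in Ioc 0 (2 * Real.pi), F (circleMap 0 1 θ * z)) :
    ∫⁻ z, G z ≤ ∫⁻ z, F z := by
  have hpi : (0:ℝ) < 2 * Real.pi := by positivity
  have h1 : (∫⁻ z, G z) * ENNReal.ofReal (2 * Real.pi) ≤
      (∫⁻ z, F z) * ENNReal.ofReal (2 * Real.pi) := by
    rw [← lintegral_mul_const _ hG]
    calc _ ≤ ∫⁻ z, ∫⁻ θ in Ioc 0 (2 * Real.pi), F (circleMap 0 1 θ * z) := lintegral_mono h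
      _ = ∫⁻ θ in Ioc 0 (2 * Real.pi), ∫⁻ z, F (circleMap 0 1 θ * z) := by
        apply lintegral_lintegral_swap
        apply Measurable.aemeasurable
        apply hF.comp
        exact (((continuous_circleMap 0 1).comp continuous_snd).mul continuous_fst).measurable
      _ = ∫⁻ θ in Ioc 0 (2 * Real.pi), ∫⁻ z, F z := by
        congr 1; ext θ
        have hm := (rotation ⟨circleMap 0 1 θ, by simp [Submonoid.unitSphere]⟩).measurePreserving
        have := hm.lintegral_comp hF
        simpa using! this
      _ = _ := by simp
  exact (ENNReal.mul_le_mul_iff_left (by simpa using hpi) ENNReal.ofReal_ne_top).1 h1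

lemma circ_mean (V : ℂ → ℂ) (hV : Differentiable ℂ V) (z : ℂ) :
    ‖V 0‖ₑ ^ 2 * ENNReal.ofReal (2 * Real.pi) ≤
      ∫⁻ θ in Ioc 0 (2 * Real.pi), ‖V (circleMap 0 1 θ * z)‖ₑ ^ 2 := by
  have hpi : (0:ℝ) < 2 * Real.pi := by positivity
  have hd : Differentiable ℂ (fun w : ℂ => V (w * z) ^ 2) := by fun_prop
  have h := (hd.diffContOnCl (s := ball 0 |1|)).circleAverage
  rw [Real.circleAverage_def, inv_smul_eq_iff₀ hpi.ne',
    intervalIntegral.integral_of_le hpi.le] at h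
  have h2 := enorm_integral_le_lintegral_enorm (μ := volume.restrict (Ioc 0 (2 * Real.pi)))
    (fun θ => V (circleMap 0 1 θ * z) ^ 2)
  rw [h] at h2
  simp only [zero_mul, enorm_smul, enorm_pow, Real.enorm_of_nonneg hpi.le] at h2
  rwa [mul_comm]

lemma circ_deriv (X : ℂ → ℂ) (U : Set ℂ) (hU : IsOpen U) (hs : closedBall 0 1 ⊆ U)
    (hX : DifferentiableOn ℂ X U) :
    ‖deriv X 0‖ₑ * ENNReal.ofReal (2 * Real.pi) ≤
      ∫⁻ θ in Ioc 0 (2 * Real.pi), 2 * ‖(X (circleMap 0 1 θ)).re‖ₑ := by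
  have hpi : (0:ℝ) < 2 * Real.pi := by positivity
  have h0U : U ∈ nhds (0:ℂ) := hU.mem_nhds (hs (by simp))
  have hd1 : DifferentiableOn ℂ (dslope X 0) U := (Complex.differentiableOn_dslope h0U).2 hX
  have hd2 : DifferentiableOn ℂ (fun w => w * (X w + (starRingEnd ℂ) (X 0))) U := by fun_prop
  have hcl : closure (ball (0:ℂ) |1|) ⊆ U := by
    rw [closure_ball _ (by simp)]; simpa using hs
  have h1 := (hd1.mono hcl).diffContOnCl.circleAverage
  have h2 := (hd2.mono hcl).diffContOnCl.circleAverage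
  rw [Real.circleAverage_def, inv_smul_eq_iff₀ hpi.ne',
    intervalIntegral.integral_of_le hpi.le] at h1 h2
  have hmem : ∀ θ, circleMap 0 1 θ ∈ U := fun θ => hs (by simp)
  have c1 : Continuous (fun θ => dslope X 0 (circleMap 0 1 θ)) :=
    hd1.continuousOn.comp_continuous (continuous_circleMap 0 1) hmem
  have c2 : Continuous (fun θ => circleMap 0 1 θ * (X (circleMap 0 1 θ) + (starRingEnd ℂ) (X 0))) :=
    hd2.continuousOn.comp_continuous (continuous_circleMap 0 1) hmem
  have i1 : IntegrableOn (fun θ => dslope X 0 (circleMap 0 1 θ)) (Ioc 0 (2 * Real.pi)) :=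
    c1.integrableOn_Ioc
  have i2 : IntegrableOn (fun θ => (starRingEnd ℂ) (circleMap 0 1 θ *
      (X (circleMap 0 1 θ) + (starRingEnd ℂ) (X 0)))) (Ioc 0 (2 * Real.pi)) :=
    (Complex.continuous_conj.comp c2).integrableOn_Ioc
  have h3 := congrArg (starRingEnd ℂ) h2
  rw [← integral_conj] at h3
  have h4 : ∫ θ in Ioc 0 (2 * Real.pi), (circleMap 0 1 θ)⁻¹ * (2 * ((X (circleMap 0 1 θ)).re : ℂ))
      = (2 * Real.pi) • deriv X 0 := by
    have := integral_add i1 i2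
    rw [h1, h3] at this
    simp only [dslope_same, zero_mul, smul_zero, map_zero, add_zero] at this
    rw [← this]
    congr 1; ext θ
    have hne : circleMap 0 1 θ ≠ 0 := by simp [circleMap]
    have hc : (starRingEnd ℂ) (circleMap 0 1 θ) = (circleMap 0 1 θ)⁻¹ := by
      rw [Complex.inv_def, Complex.normSq_eq_norm_sq]; simp
    rw [dslope_of_ne _ hne, slope_def_field, map_mul, hc, map_add, Complex.conj_conj]
    have hre := Complex.add_conj (X (circleMap 0 1 θ))
    push_cast at hre
    rw [← hre]
    field_simp
    ring
  have h5 := enorm_integral_le_lintegral_enorm (μ := volume.restrict (Ioc 0 (2 * Real.pi)))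
    (fun θ => (circleMap 0 1 θ)⁻¹ * (2 * ((X (circleMap 0 1 θ)).re : ℂ)))
  rw [h4, enorm_smul, Real.enorm_of_nonneg hpi.le, mul_comm] at h5
  refine h5.trans (le_of_eq ?_)
  congr 1; ext θ
  have e1 : ‖(circleMap 0 1 θ)⁻¹‖ₑ = 1 := by
    rw [← ofReal_norm]; simp
  rw [enorm_mul, enorm_mul, e1, one_mul]
  congr 1
  · rw [← ofReal_norm]; simp
  · rw [← ofReal_norm, ← ofReal_norm]; simp

lemma scale_lint (F : ℂ → ℝ≥0∞) (a : ℂ) (r : ℝ) (hr : 0 < r) :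
    ∫⁻ w, F (a + r * w) = ENNReal.ofReal (r ^ 2)⁻¹ * ∫⁻ z, F z := by
  have h1 : ∫⁻ w : ℂ, F (a + r * w) = ∫⁻ w : ℂ, (fun y => F (a + y)) (r • w) := by simp
  have h3 := lintegral_map_equiv (μ := volume) (fun y => F (a + y))
    (Homeomorph.smulOfNeZero r hr.ne' : ℂ ≃ₜ ℂ).toMeasurableEquiv
  rw [h1]
  refine h3.symm.trans ?_
  have h2 : Measure.map (⇑(Homeomorph.smulOfNeZero r hr.ne' : ℂ ≃ₜ ℂ).toMeasurableEquiv) volume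
     = ENNReal.ofReal (r ^ 2)⁻¹ • volume := by
    have := Measure.map_addHaar_smul (volume : Measure ℂ) hr.ne'
    simp only [Complex.finrank_real_complex] at this
    rw [abs_of_pos (by positivity)] at this
    exact this
  rw [h2, lintegral_smul_measure, lintegral_add_left_eq_self]
  rfl

lemma submean (f : ℂ → ℂ) (hf : Differentiable ℂ f) (b : ℂ) (s : ℝ) (hs : 0 < s) :
    ‖f b‖ₑ ^ 2 * ENNReal.ofReal (Real.pi * s ^ 2) ≤ ∫⁻ z in ball b s, ‖f z‖ₑ ^ 2 := by
  have hfc := hf.continuous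
  have hfm := hfc.measurable
  have h := rot_lint (fun z => (ball (0:ℂ) s).indicator (fun z => ‖f (b + z)‖ₑ ^ 2) z)
    (fun z => (ball (0:ℂ) s).indicator (fun z => ‖f b‖ₑ ^ 2) z)
    (Measurable.indicator (by fun_prop) measurableSet_ball)
    (Measurable.indicator (by fun_prop) measurableSet_ball) (by
      intro z
      have h1 := circ_mean (fun z => f (b + z)) (by fun_prop) z
      by_cases hz : z ∈ ball (0:ℂ) s
      · have : ∀ θ, circleMap 0 1 θ * z ∈ ball (0:ℂ) s := by intro θ; simpa using hz
        simpa [indicator_of_mem, hz, this] using h1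
      · simp [indicator_of_notMem, hz])
  rw [lintegral_indicator measurableSet_ball] at h
  rw [← lintegral_indicator measurableSet_ball]
  have h2 := lintegral_add_left_eq_self (μ := volume) (fun z => (ball b s).indicator (fun z => ‖f z‖ₑ ^ 2) z) b
  rw [← h2]
  have h3 : ∀ z, (ball b s).indicator (fun z => ‖f z‖ₑ ^ 2) (b + z) =
      (ball (0:ℂ) s).indicator (fun z => ‖f (b + z)‖ₑ ^ 2) z := by
    intro z; simp [indicator]
  simp only [h3]
  refine le_trans (le_of_eq ?_) h
  rw [setLIntegral_const, Complex.volume_ball]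
  congr 1
  rw [mul_comm, ENNReal.ofReal_mul (by positivity), ENNReal.ofReal_pow hs.le]
  congr 1
  rw [← ENNReal.ofReal_coe_nnreal, NNReal.coe_real_pi]

/-- Logarithmic part of the local estimate. -/
lemma local_log (f : ℂ → ℂ) (hf : Differentiable ℂ f) (δ : ℝ) (hδ : 0 < δ) (h0 : 1 / 2 < ‖f 0‖)
    (hz : ∀ z ∈ ball (0:ℂ) δ, ‖f z - f 0‖ ≤ 1 / 4) :
    ‖deriv f 0 / f 0‖ₑ * ∫⁻ z in ball (0:ℂ) δ, ‖z‖ₑ ≤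
      8 * ∫⁻ z in ball (0:ℂ) δ, ‖‖f z‖ - 1‖ₑ := by
  have hfc := hf.continuous
  have hfm := hfc.measurable
  have hf0 : f 0 ≠ 0 := by intro h; rw [h] at h0; norm_num at h0
  have hlow : ∀ z ∈ ball (0:ℂ) δ, 1 / 4 ≤ ‖f z‖ := by
    intro z hzz
    have h1 := hz z hzz
    have h2 := norm_sub_norm_le (f 0) (f z)
    rw [norm_sub_rev] at h2; linarith
  let V : ℂ → ℂ := fun z => Complex.log (f z / f 0) + (Real.log ‖f 0‖ : ℝ)
  have hslit : ∀ z ∈ ball (0:ℂ) δ, f z / f 0 ∈ Complex.slitPlane := by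
    intro z hzz
    have : f z / f 0 = 1 + (f z - f 0) / f 0 := by field_simp; ring
    rw [this]
    apply Complex.mem_slitPlane_of_norm_lt_one
    rw [norm_div, div_lt_one (by linarith)]
    linarith [hz z hzz]
  have hVd : DifferentiableOn ℂ V (ball 0 δ) := by
    intro z hzz
    apply DifferentiableAt.differentiableWithinAt
    exact (((hf z).div_const _).clog (hslit z hzz)).add_const _
  have hVre : ∀ z ∈ ball (0:ℂ) δ, (V z).re = Real.log ‖f z‖ := by
    intro z hzz
    have := hlow z hzz
    simp only [V, Complex.add_re, Complex.log_re, Complex.ofReal_re, norm_div]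
    rw [Real.log_div (by linarith) (by linarith)]; ring
  have h0m : (0:ℂ) ∈ ball (0:ℂ) δ := by simpa using hδ
  have hV' : HasDerivAt V (deriv f 0 / f 0) 0 := by
    have h1 := ((((hf 0).hasDerivAt).div_const (f 0)).clog (hslit 0 h0m)).add_const
      ((Real.log ‖f 0‖ : ℝ) : ℂ)
    rw [div_self hf0, div_one] at h1
    exact h1
  have h := rot_lint (fun z => (ball (0:ℂ) δ).indicator (fun z => 2 * ‖Real.log ‖f z‖‖ₑ) z)
    (fun z => (ball (0:ℂ) δ).indicator (fun z => ‖deriv f 0 / f 0‖ₑ * ‖z‖ₑ) z)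
    (Measurable.indicator (by fun_prop) measurableSet_ball)
    (Measurable.indicator (by fun_prop) measurableSet_ball) (by
      intro z
      by_cases hzz : z ∈ ball (0:ℂ) δ
      · have hm : ∀ w ∈ closedBall (0:ℂ) 1, w * z ∈ ball (0:ℂ) δ := by
          intro w hw
          simp only [mem_closedBall, mem_ball, dist_zero_right, norm_mul] at *
          exact lt_of_le_of_lt (mul_le_of_le_one_left (norm_nonneg _) hw) hzz
        have hm1 : ∀ θ, circleMap 0 1 θ * z ∈ ball (0:ℂ) δ := by
          intro θ; exact hm _ (by simp)
        have h1 := circ_deriv (fun w => V (w * z)) {w | w * z ∈ ball (0:ℂ) δ}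
          (isOpen_ball.preimage (by fun_prop)) hm
          (hVd.comp (by fun_prop) (fun w hw => hw))
        have h2 : HasDerivAt (fun w => V (w * z)) (deriv f 0 / f 0 * z) 0 := by
          have h3 : HasDerivAt (fun w : ℂ => w * z) z 0 := by
            simpa using (hasDerivAt_id (0:ℂ)).mul_const z
          have h4 : HasDerivAt V (deriv f 0 / f 0) ((fun w : ℂ => w * z) 0) := by simpa using hV'
          exact h4.comp 0 h3
        rw [h2.deriv, enorm_mul] at h1
        simp only [hVre _ (hm1 _)] at h1
        simpa only [indicator_of_mem, hzz, hm1] using h1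
      · simp [indicator_of_notMem, hzz])
  rw [lintegral_indicator measurableSet_ball, lintegral_indicator measurableSet_ball,
    lintegral_const_mul _ (by fun_prop)] at h
  refine h.trans ?_
  rw [← lintegral_const_mul _ (by fun_prop)]
  apply setLIntegral_mono (by fun_prop)
  intro z hzz
  have hl := hlow z hzz
  have : ‖Real.log ‖f z‖‖ ≤ 4 * ‖‖f z‖ - 1‖ := by
    rw [Real.norm_eq_abs, Real.norm_eq_abs]
    set x := ‖f z‖
    have hx : 0 < x := by linarith
    have h1 := Real.log_le_sub_one_of_pos hx
    have h2 := Real.one_sub_inv_le_log_of_pos hx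
    have h3 : 1 - x⁻¹ = (x - 1) * x⁻¹ := by field_simp
    have h4 : x⁻¹ ≤ 4 := by
      rw [inv_le_comm₀ hx (by norm_num)]; linarith
    have h5 : 0 < x⁻¹ := by positivity
    rw [abs_le]
    constructor
    · have : -(4 * |x - 1|) ≤ (x - 1) * x⁻¹ := by
        have a1 := neg_abs_le (x - 1)
        nlinarith [abs_nonneg (x - 1)]
      linarith
    · have := le_abs_self (x - 1)
      have := abs_nonneg (x - 1)
      linarith
  have e2 : ‖Real.log ‖f z‖‖ₑ ≤ 4 * ‖‖f z‖ - 1‖ₑ := by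
    rw [← ofReal_norm, ← ofReal_norm]
    refine (ENNReal.ofReal_le_ofReal this).trans (le_of_eq ?_)
    rw [ENNReal.ofReal_mul (by norm_num)]; simp
  calc _ ≤ 2 * (4 * ‖‖f z‖ - 1‖ₑ) := by gcongr
    _ = _ := by rw [← mul_assoc]; norm_num

lemma local_unit : ∃ C : ℝ≥0∞, C ≠ ⊤ ∧ ∀ f : ℂ → ℂ, Differentiable ℂ f →
    ‖deriv f 0‖ₑ ^ 2 ≤ C * ∫⁻ z in ball (0:ℂ) 1, ‖‖f z‖ - 1‖ₑ ^ 2 := by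
  set c1 : ℝ≥0∞ := ∫⁻ z in ball (0:ℂ) (1/64), ‖z‖ₑ with hc1
  have c1pos : c1 ≠ 0 := by
    intro h
    rw [hc1, lintegral_eq_zero_iff (by fun_prop)] at h
    have h2 : ∀ᵐ z ∂(volume.restrict (ball (0:ℂ) (1/64))), z = 0 := by
      filter_upwards [h] with z hz; simpa using hz
    rw [ae_iff, Measure.restrict_apply' measurableSet_ball] at h2
    have h3 : volume (ball (0:ℂ) (1/64)) ≤ volume ({a : ℂ | ¬ a = 0} ∩ ball (0:ℂ) (1/64)) + volume {(0:ℂ)} := by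
      refine le_trans (measure_mono ?_) (measure_union_le _ _)
      intro z hz
      by_cases h : z = 0
      · right; simpa using h
      · left; exact ⟨h, hz⟩
    rw [h2] at h3
    simp only [measure_singleton, add_zero] at h3
    exact (measure_ball_pos volume (0:ℂ) (by norm_num : (0:ℝ) < 1/64)).not_ge h3
  set vol := volume (ball (0:ℂ) (1/64)) with hvol
  have hvolt : vol ≠ ⊤ := measure_ball_lt_top.ne
  refine ⟨ENNReal.ofReal (32 * 65536 + 32) + 16 * 64 * vol / c1 ^ 2, ?_, ?_⟩
  · refine ENNReal.add_ne_top.2 ⟨ENNReal.ofReal_ne_top, ENNReal.div_ne_top ?_ (by simpa using c1pos)⟩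
    exact ENNReal.mul_ne_top (by norm_num) hvolt
  intro f hf
  have hfc := hf.continuous
  have hfm := hfc.measurable
  set E := ∫⁻ z in ball (0:ℂ) 1, ‖‖f z‖ - 1‖ₑ ^ 2 with hE
  by_cases hEt : E = ⊤
  · rw [hEt, ENNReal.mul_top]
    · exact le_top
    · intro h
      have := (add_eq_zero.1 h).1
      norm_num at this
  obtain ⟨e, he0, heE⟩ : ∃ e : ℝ, 0 ≤ e ∧ E = ENNReal.ofReal e :=
    ⟨E.toReal, ENNReal.toReal_nonneg, (ENNReal.ofReal_toReal hEt).symm⟩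
  have hpi := Real.pi_gt_three
  have hN : ∫⁻ z in ball (0:ℂ) 1, ‖f z‖ₑ ^ 2 ≤ ENNReal.ofReal (2 * Real.pi + 2 * e) := by
    calc _ ≤ ∫⁻ z in ball (0:ℂ) 1, (2 + 2 * ‖‖f z‖ - 1‖ₑ ^ 2) := by
          apply lintegral_mono
          intro z
          simp only
          rw [← ofReal_norm, ← ofReal_norm, ← ENNReal.ofReal_pow (norm_nonneg _),
            ← ENNReal.ofReal_pow (norm_nonneg _)]
          have : (2:ℝ≥0∞) = ENNReal.ofReal 2 := by simp
          rw [this, ← ENNReal.ofReal_mul (by norm_num), ← ENNReal.ofReal_add (by norm_num) (by positivity)]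
          apply ENNReal.ofReal_le_ofReal
          rw [Real.norm_eq_abs, sq_abs]
          nlinarith [sq_nonneg (‖f z‖ - 2)]
      _ = _ := by
          rw [lintegral_add_left (by fun_prop), lintegral_const_mul _ (by fun_prop), setLIntegral_const,
            ← hE, heE, Complex.volume_ball, ENNReal.ofReal_add (by positivity) (by positivity),
            ENNReal.ofReal_mul (by norm_num), ENNReal.ofReal_mul (by norm_num)]
          simp
          rw [← ENNReal.ofReal_coe_nnreal, NNReal.coe_real_pi]
  have hb : ∀ b ∈ closedBall (0:ℂ) (1/2), ‖f b‖ ^ 2 ≤ 8 + 8 * e := by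
    intro b hb
    have h1 := submean f hf b (1/2) (by norm_num)
    have h2 : ∫⁻ z in ball b (1/2), ‖f z‖ₑ ^ 2 ≤ ∫⁻ z in ball (0:ℂ) 1, ‖f z‖ₑ ^ 2 := by
      apply lintegral_mono_set
      apply ball_subset_ball'
      have : dist b 0 ≤ 1/2 := hb
      linarith
    have h3 := (h1.trans h2).trans hN
    rw [← ofReal_norm, ← ENNReal.ofReal_pow (norm_nonneg _), ← ENNReal.ofReal_mul (by positivity),
      ENNReal.ofReal_le_ofReal_iff (by positivity)] at h3
    by_contra hcon
    push Not at hcon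
    nlinarith
  by_cases hcase : 1 / 65536 ≤ e
  · have h1 : ‖deriv f 0‖ ≤ Real.sqrt (8 + 8 * e) / (1/2) := by
      apply Complex.norm_deriv_le_of_forall_mem_sphere_norm_le (by norm_num) hf.diffContOnCl
      intro z hz
      exact Real.le_sqrt_of_sq_le (hb z (sphere_subset_closedBall hz))
    have h2 : ‖deriv f 0‖ ^ 2 ≤ (32 * 65536 + 32) * e := by
      have h3 : ‖deriv f 0‖ ^ 2 ≤ (Real.sqrt (8 + 8 * e) / (1/2)) ^ 2 := by gcongr
      rw [div_pow, Real.sq_sqrt (by positivity)] at h3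
      norm_num at h3
      linarith
    rw [heE]
    calc _ = ENNReal.ofReal (‖deriv f 0‖ ^ 2) := by
            rw [← ofReal_norm, ← ENNReal.ofReal_pow (norm_nonneg _)]
      _ ≤ ENNReal.ofReal ((32 * 65536 + 32) * e) := ENNReal.ofReal_le_ofReal h2
      _ = ENNReal.ofReal (32 * 65536 + 32) * ENNReal.ofReal e := ENNReal.ofReal_mul (by norm_num)
      _ ≤ _ := by gcongr; exact le_self_add
  push Not at hcase
  have hb4 : ∀ b ∈ closedBall (0:ℂ) (1/2), ‖f b‖ ≤ 4 := by
    intro b hbb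
    have := hb b hbb
    nlinarith [norm_nonneg (f b)]
  have hd : ∀ b ∈ ball (0:ℂ) (1/64), ‖deriv f b‖ ≤ 16 := by
    intro b hbb
    have := Complex.norm_deriv_le_of_forall_mem_sphere_norm_le (c := b) (R := 1/4) (C := 4) (f := f)
      (by norm_num) hf.diffContOnCl (by
        intro z hz
        apply hb4
        rw [mem_sphere] at hz
        rw [mem_ball] at hbb
        rw [mem_closedBall]
        linarith [dist_triangle z b 0])
    linarith
  have hz : ∀ z ∈ ball (0:ℂ) (1/64), ‖f z - f 0‖ ≤ 1 / 4 := by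
    intro z hzz
    have h1 := (convex_ball (0:ℂ) (1/64)).norm_image_sub_le_of_norm_deriv_le
      (f := f) (C := 16) (fun x _ => hf x) hd (mem_ball_self (by norm_num)) hzz
    rw [mem_ball, dist_eq_norm] at hzz
    linarith
  have h0 : 1 / 2 < ‖f 0‖ := by
    by_contra hcon
    push Not at hcon
    have h1 : ENNReal.ofReal (1/16) * vol ≤ E := by
      calc _ = ∫⁻ z in ball (0:ℂ) (1/64), ENNReal.ofReal (1/16) := by rw [setLIntegral_const]
        _ ≤ ∫⁻ z in ball (0:ℂ) (1/64), ‖‖f z‖ - 1‖ₑ ^ 2 := by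
          apply setLIntegral_mono (by fun_prop)
          intro z hzz
          rw [← ofReal_norm, ← ENNReal.ofReal_pow (norm_nonneg _)]
          apply ENNReal.ofReal_le_ofReal
          rw [Real.norm_eq_abs, sq_abs]
          have h2 := hz z hzz
          have h3 := norm_sub_norm_le (f z) (f 0)
          have h4 : ‖f z‖ ≤ 3/4 := by linarith
          nlinarith
        _ ≤ _ := lintegral_mono_set (ball_subset_ball (by norm_num))
    rw [hvol, Complex.volume_ball, heE, ← ENNReal.ofReal_coe_nnreal, NNReal.coe_real_pi,
      ← ENNReal.ofReal_pow (by norm_num), ← ENNReal.ofReal_mul (by positivity),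
      ← ENNReal.ofReal_mul (by positivity), ENNReal.ofReal_le_ofReal_iff he0] at h1
    linarith
  have hlog := local_log f hf (1/64) (by norm_num) h0 hz
  rw [← hc1] at hlog
  have hcs := cs_lint (volume.restrict (ball (0:ℂ) (1/64))) (fun z => ‖‖f z‖ - 1‖ₑ) (fun _ => 1)
    (by fun_prop) (by fun_prop)
  simp only [mul_one, one_pow, lintegral_const, one_mul, Measure.restrict_apply_univ] at hcs
  rw [← hvol] at hcs
  have hf0 : f 0 ≠ 0 := by intro h; rw [h] at h0; norm_num at h0
  have hq : ‖deriv f 0‖ₑ ≤ 4 * ‖deriv f 0 / f 0‖ₑ := by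
    have h1 : deriv f 0 = f 0 * (deriv f 0 / f 0) := by field_simp
    conv_lhs => rw [h1]
    rw [enorm_mul]
    gcongr
    rw [← ofReal_norm]
    refine (ENNReal.ofReal_le_ofReal (hb4 0 (by simp))).trans (by simp)
  have hmain : ‖deriv f 0‖ₑ ^ 2 * c1 ^ 2 ≤ 16 * 64 * vol * E := by
    calc ‖deriv f 0‖ₑ ^ 2 * c1 ^ 2 ≤ (4 * ‖deriv f 0 / f 0‖ₑ) ^ 2 * c1 ^ 2 := by gcongr
      _ = 16 * (‖deriv f 0 / f 0‖ₑ * c1) ^ 2 := by ring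
      _ ≤ 16 * (8 * ∫⁻ z in ball (0:ℂ) (1/64), ‖‖f z‖ - 1‖ₑ) ^ 2 := by gcongr
      _ = 16 * 64 * (∫⁻ z in ball (0:ℂ) (1/64), ‖‖f z‖ - 1‖ₑ) ^ 2 := by ring
      _ ≤ 16 * 64 * ((∫⁻ z in ball (0:ℂ) (1/64), ‖‖f z‖ - 1‖ₑ ^ 2) * vol) := by gcongr
      _ ≤ 16 * 64 * (E * vol) := by
          gcongr
          exact lintegral_mono_set (ball_subset_ball (by norm_num))
      _ = _ := by ring
  have hc1t : c1 ≠ ⊤ := by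
    refine ne_top_of_le_ne_top (b := ∫⁻ z in ball (0:ℂ) (1/64), 1) ?_ ?_
    · rw [setLIntegral_const, one_mul]; exact hvolt
    · apply setLIntegral_mono (by fun_prop)
      intro z hzz
      rw [← ofReal_norm]
      refine (ENNReal.ofReal_le_ofReal (q := 1) ?_).trans (by simp)
      rw [mem_ball, dist_zero_right] at hzz; linarith
  calc _ ≤ 16 * 64 * vol * E / c1 ^ 2 := by
        rw [ENNReal.le_div_iff_mul_le (Or.inl (by simpa using c1pos)) (Or.inl (by simpa using hc1t))]
        exact hmain
    _ = 16 * 64 * vol / c1 ^ 2 * E := by rw [ENNReal.mul_div_right_comm]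
    _ ≤ _ := by gcongr; exact le_add_self

lemma inner_t (c : ℝ) (hc : 0 < c) :
    ∫⁻ t in Ioc (0:ℝ) 1, ENNReal.ofReal (t⁻¹ ^ 3 * Real.exp (-c / t ^ 2)) ≤
      ENNReal.ofReal (Real.exp (-c) / (2 * c)) := by
  let F : ℝ → ℝ := fun t => if t = 0 then 0 else Real.exp (-c / t ^ 2) / (2 * c)
  have hFb : ∀ t, ‖F t‖ ≤ t ^ 2 / (2 * c ^ 2) := by
    intro t
    by_cases ht : t = 0
    · simp [F, ht]
    · have ht2 : 0 < t ^ 2 := by positivity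
      simp only [F, ht, if_false]
      rw [Real.norm_of_nonneg (by positivity)]
      have h1 := Real.add_one_le_exp (c / t ^ 2)
      have h2 : Real.exp (-c / t ^ 2) ≤ t ^ 2 / c := by
        rw [neg_div, Real.exp_neg, inv_le_comm₀ (Real.exp_pos _) (by positivity), inv_div]
        linarith
      calc _ ≤ (t ^ 2 / c) / (2 * c) := by gcongr
        _ = _ := by field_simp
  have hder : ∀ t, 0 < t → HasDerivAt F (t⁻¹ ^ 3 * Real.exp (-c / t ^ 2)) t := by
    intro t ht
    have h1 : HasDerivAt (fun t : ℝ => Real.exp (-c / t ^ 2) / (2 * c))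
        (t⁻¹ ^ 3 * Real.exp (-c / t ^ 2)) t := by
      have h2 : HasDerivAt (fun t : ℝ => -c / t ^ 2) (2 * c / t ^ 3) t := by
        have := ((hasDerivAt_const t (-c)).div (hasDerivAt_pow 2 t) (by positivity))
        refine HasDerivAt.congr_deriv this ?_
        simp only [Nat.cast_ofNat, zero_mul]
        field_simp
        ring
      refine (h2.exp.div_const (2 * c)).congr_deriv ?_
      field_simp
    refine h1.congr_of_eventuallyEq ?_
    filter_upwards [isOpen_ne.mem_nhds ht.ne'] with s hs
    simp only [F]; rw [if_neg hs]
  have hcont : ContinuousOn F (Icc 0 1) := by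
    intro t ht
    rcases ht.1.eq_or_lt with h | h
    · subst h
      apply ContinuousAt.continuousWithinAt
      have : F 0 = 0 := by simp [F]
      rw [ContinuousAt, this]
      apply squeeze_zero_norm hFb
      have : Continuous (fun t : ℝ => t ^ 2 / (2 * c ^ 2)) := by fun_prop
      simpa using this.tendsto 0
    · exact (hder t h).continuousAt.continuousWithinAt
  have hpos : ∀ t ∈ Ioc (0:ℝ) 1, 0 ≤ t⁻¹ ^ 3 * Real.exp (-c / t ^ 2) := by
    intro t ht; have := ht.1; positivity
  have hIntg : IntegrableOn (fun t : ℝ => t⁻¹ ^ 3 * Real.exp (-c / t ^ 2)) (Ioc 0 1) :=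
    intervalIntegral.integrableOn_deriv_of_nonneg hcont (fun t ht => hder t ht.1)
      (fun t ht => hpos t ⟨ht.1, ht.2.le⟩)
  have h3 := intervalIntegral.integral_eq_sub_of_hasDerivAt_of_le zero_le_one hcont
    (fun t ht => hder t ht.1) ((intervalIntegrable_iff_integrableOn_Ioc_of_le zero_le_one).2 hIntg)
  rw [← ofReal_integral_eq_lintegral_ofReal hIntg]
  · rw [← intervalIntegral.integral_of_le zero_le_one, h3]
    simp [F]
  · exact (ae_restrict_iff' measurableSet_Ioc).2 (Filter.Eventually.of_forall hpos)

lemma path_bound (g : ℂ → ℂ) (hg : Differentiable ℂ g) (z : ℂ) :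
    ‖g z - g 0‖ₑ ≤ ∫⁻ t in Ioc (0:ℝ) 1, ‖z‖ₑ * ‖deriv g (t * z)‖ₑ := by
  have hc : Continuous (deriv g) := (hg.contDiff (n := 1)).continuous_deriv le_rfl
  have h := intervalIntegral.integral_eq_sub_of_hasDerivAt (a := 0) (b := 1)
    (f := fun t : ℝ => g (t * z)) (f' := fun t : ℝ => z * deriv g (t * z)) (by
      intro t _
      have h1 : HasDerivAt (fun t : ℝ => (t : ℂ) * z) z t := by
        simpa using (Complex.ofRealCLM.hasDerivAt (x := t)).mul_const z
      have h2 := (hg (t * z)).hasDerivAt.comp t h1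
      rw [mul_comm] at h2
      exact h2) (Continuous.intervalIntegrable (by fun_prop) _ _)
  rw [intervalIntegral.integral_of_le zero_le_one] at h
  have h2 := enorm_integral_le_lintegral_enorm (μ := volume.restrict (Ioc (0:ℝ) 1))
    (fun t : ℝ => z * deriv g (t * z))
  rw [h] at h2
  simpa [enorm_mul] using h2

lemma cs_weight (f : ℝ → ℝ≥0∞) (hf : Measurable f) (p : ℝ → ℝ) (hp : Measurable p)
    (hpos : ∀ t ∈ Ioc (0:ℝ) 1, 0 < p t) :
    (∫⁻ t in Ioc (0:ℝ) 1, f t) ^ 2 ≤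
      (∫⁻ t in Ioc (0:ℝ) 1, f t ^ 2 * ENNReal.ofReal (p t)⁻¹) *
        ∫⁻ t in Ioc (0:ℝ) 1, ENNReal.ofReal (p t) := by
  have h := cs_lint (volume.restrict (Ioc (0:ℝ) 1))
    (fun t => f t * ENNReal.ofReal (Real.sqrt (p t))⁻¹) (fun t => ENNReal.ofReal (Real.sqrt (p t)))
    (by fun_prop) (by fun_prop)
  refine le_trans (le_of_eq ?_) (h.trans (le_of_eq ?_))
  · congr 1
    apply setLIntegral_congr_fun measurableSet_Ioc
    intro t ht
    have h1 : 0 < Real.sqrt (p t) := Real.sqrt_pos.2 (hpos t ht)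
    simp only
    rw [mul_assoc, ← ENNReal.ofReal_mul (by positivity), inv_mul_cancel₀ h1.ne']; simp
  · congr 1
    · apply setLIntegral_congr_fun measurableSet_Ioc
      intro t ht
      have h1 : 0 < Real.sqrt (p t) := Real.sqrt_pos.2 (hpos t ht)
      simp only
      rw [mul_pow, ← ENNReal.ofReal_pow (by positivity), inv_pow, Real.sq_sqrt (hpos t ht).le]
    · apply setLIntegral_congr_fun measurableSet_Ioc
      intro t ht
      simp only
      rw [← ENNReal.ofReal_pow (by positivity), Real.sq_sqrt (hpos t ht).le]

lemma int_p (R : ℝ) :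
    ∫⁻ t in Ioc (0:ℝ) 1, ENNReal.ofReal (t * R ^ 2 * Real.exp (t ^ 2 * R ^ 2 / 2)) ≤
      ENNReal.ofReal (Real.exp (R ^ 2 / 2)) := by
  have hc : Continuous (fun t : ℝ => t * R ^ 2 * Real.exp (t ^ 2 * R ^ 2 / 2)) := by fun_prop
  rw [← ofReal_integral_eq_lintegral_ofReal hc.integrableOn_Ioc]
  · apply ENNReal.ofReal_le_ofReal
    rw [← intervalIntegral.integral_of_le zero_le_one,
      intervalIntegral.integral_eq_sub_of_hasDerivAt
        (f := fun t => Real.exp (t ^ 2 * R ^ 2 / 2)) _ (hc.intervalIntegrable _ _)]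
    · simp
    · intro t _
      have h1 : HasDerivAt (fun t : ℝ => t ^ 2 * R ^ 2 / 2) (t * R ^ 2) t := by
        refine (((hasDerivAt_pow 2 t).mul_const (R ^ 2)).div_const 2).congr_deriv ?_
        simp only [Nat.cast_ofNat]; ring
      refine h1.exp.congr_deriv ?_
      ring
  · refine (ae_restrict_iff' measurableSet_Ioc).2 (Filter.Eventually.of_forall ?_)
    intro t ht
    have := ht.1
    simp only [Pi.zero_apply]; positivity

lemma hardy_k (k : ℂ → ℝ≥0∞) (hk : Measurable k) (hk0 : k 0 = 0) :
    ∫⁻ z : ℂ, (∫⁻ t in Ioc (0:ℝ) 1, ‖z‖ₑ * k (t * z)) ^ 2 * ENNReal.ofReal (Real.exp (-‖z‖ ^ 2)) ≤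
    ∫⁻ y : ℂ, k y ^ 2 * ENNReal.ofReal (Real.exp (-‖y‖ ^ 2) / ‖y‖ ^ 2) := by
  calc _ ≤ ∫⁻ z : ℂ, ∫⁻ t in Ioc (0:ℝ) 1, k (t * z) ^ 2 * ENNReal.ofReal (t⁻¹ *
          Real.exp (-‖(t:ℂ) * z‖ ^ 2 / 2) * Real.exp (-‖z‖ ^ 2 / 2)) := by
        apply lintegral_mono
        intro z
        by_cases hz : z = 0
        · simp [hz]
        have hz0 : 0 < ‖z‖ := norm_pos_iff.2 hz
        have h1 := cs_weight (fun t => ‖z‖ₑ * k (t * z)) (by fun_prop)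
          (fun t => t * ‖z‖ ^ 2 * Real.exp (t ^ 2 * ‖z‖ ^ 2 / 2)) (by fun_prop)
          (fun t ht => by have := ht.1; positivity)
        have h2 := int_p ‖z‖
        calc _ ≤ (∫⁻ t in Ioc (0:ℝ) 1, (‖z‖ₑ * k (t * z)) ^ 2 *
              ENNReal.ofReal (t * ‖z‖ ^ 2 * Real.exp (t ^ 2 * ‖z‖ ^ 2 / 2))⁻¹) *
                ENNReal.ofReal (Real.exp (‖z‖ ^ 2 / 2)) * ENNReal.ofReal (Real.exp (-‖z‖ ^ 2)) := by
              refine mul_le_mul_left (h1.trans (mul_le_mul_right h2 _)) _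
          _ = _ := by
              rw [mul_assoc, ← ENNReal.ofReal_mul (by positivity), ← lintegral_mul_const _ (by fun_prop)]
              apply setLIntegral_congr_fun measurableSet_Ioc
              intro t ht
              have ht0 := ht.1
              simp only
              rw [mul_pow, ← ofReal_norm, ← ENNReal.ofReal_pow (norm_nonneg _), mul_comm (ENNReal.ofReal _),
                mul_assoc, mul_assoc, ← ENNReal.ofReal_mul (by positivity), ← ENNReal.ofReal_mul (by positivity)]
              congr 2
              have e1 : ‖(t:ℂ) * z‖ ^ 2 = t ^ 2 * ‖z‖ ^ 2 := by
                rw [norm_mul, Complex.norm_real, mul_pow, Real.norm_eq_abs, sq_abs]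
              rw [e1, ← Real.exp_add, mul_assoc t⁻¹, ← Real.exp_add, mul_inv, ← Real.exp_neg, mul_inv]
              have e2 : ‖z‖ ^ 2 * (t⁻¹ * (‖z‖ ^ 2)⁻¹ * Real.exp (-(t ^ 2 * ‖z‖ ^ 2 / 2)) *
                  Real.exp (‖z‖ ^ 2 / 2 + -‖z‖ ^ 2)) = t⁻¹ * (Real.exp (-(t ^ 2 * ‖z‖ ^ 2 / 2)) *
                  Real.exp (‖z‖ ^ 2 / 2 + -‖z‖ ^ 2)) := by field_simp
              rw [e2, ← Real.exp_add]
              congr 2; ring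
    _ = ∫⁻ t in Ioc (0:ℝ) 1, ∫⁻ z : ℂ, k (t * z) ^ 2 * ENNReal.ofReal (t⁻¹ *
          Real.exp (-‖(t:ℂ) * z‖ ^ 2 / 2) * Real.exp (-‖z‖ ^ 2 / 2)) := by
        apply lintegral_lintegral_swap
        apply Measurable.aemeasurable
        simp only [Function.uncurry_def]
        fun_prop
    _ = ∫⁻ t in Ioc (0:ℝ) 1, ∫⁻ y : ℂ, k y ^ 2 * ENNReal.ofReal (Real.exp (-‖y‖ ^ 2 / 2)) *
          ENNReal.ofReal (t⁻¹ ^ 3 * Real.exp (-(‖y‖ ^ 2 / 2) / t ^ 2)) := by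
        apply setLIntegral_congr_fun measurableSet_Ioc
        intro t ht
        have ht0 := ht.1
        have h1 := scale_lint (fun y => k y ^ 2 * ENNReal.ofReal (t⁻¹ *
          Real.exp (-‖y‖ ^ 2 / 2) * Real.exp (-(‖y‖ ^ 2 / 2) / t ^ 2))) 0 t ht0
        simp only [zero_add] at h1
        simp only
        rw [← lintegral_const_mul _ (by fun_prop)] at h1
        calc _ = _ := by
              congr 1; ext z
              have e1 : ‖(t:ℂ) * z‖ ^ 2 = t ^ 2 * ‖z‖ ^ 2 := by
                rw [norm_mul, Complex.norm_real, mul_pow, Real.norm_eq_abs, sq_abs]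
              have : -‖z‖ ^ 2 / 2 = -(‖(t:ℂ) * z‖ ^ 2 / 2) / t ^ 2 := by
                rw [e1]; field_simp
              rw [this]
          _ = _ := h1
          _ = _ := by
              congr 1; ext y
              rw [mul_left_comm, ← ENNReal.ofReal_mul (by positivity), mul_assoc (k y ^ 2),
                ← ENNReal.ofReal_mul (by positivity)]
              congr 2
              field_simp
    _ = ∫⁻ y : ℂ, ∫⁻ t in Ioc (0:ℝ) 1, k y ^ 2 * ENNReal.ofReal (Real.exp (-‖y‖ ^ 2 / 2)) *
          ENNReal.ofReal (t⁻¹ ^ 3 * Real.exp (-(‖y‖ ^ 2 / 2) / t ^ 2)) := by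
        apply lintegral_lintegral_swap
        apply Measurable.aemeasurable
        simp only [Function.uncurry_def]
        fun_prop
    _ ≤ _ := by
        apply lintegral_mono
        intro y
        simp only
        rw [lintegral_const_mul _ (by fun_prop)]
        by_cases hy : y = 0
        · simp [hy, hk0]
        have hy0 : 0 < ‖y‖ := norm_pos_iff.2 hy
        have h1 := inner_t (‖y‖ ^ 2 / 2) (by positivity)
        calc _ ≤ k y ^ 2 * ENNReal.ofReal (Real.exp (-‖y‖ ^ 2 / 2)) *
              ENNReal.ofReal (Real.exp (-(‖y‖ ^ 2 / 2)) / (2 * (‖y‖ ^ 2 / 2))) := by gcongr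
          _ = _ := by
              rw [mul_assoc, ← ENNReal.ofReal_mul (by positivity), mul_div_assoc', ← Real.exp_add]
              congr 3
              · congr 1; ring
              · ring

lemma local_scaled : ∃ C : ℝ≥0∞, C ≠ ⊤ ∧ ∀ g : ℂ → ℂ, Differentiable ℂ g → ∀ a : ℂ,
    ‖deriv g a‖ₑ ^ 2 * ENNReal.ofReal (Real.exp (-‖a‖ ^ 2)) ≤
      C * (ENNReal.ofReal ((1 + ‖a‖) ^ 4) * ∫⁻ z in ball a (1 + ‖a‖)⁻¹,
        ‖‖1 + g z‖ - 1‖ₑ ^ 2 * ENNReal.ofReal (Real.exp (-‖z‖ ^ 2))) := by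
  obtain ⟨C, hC, hloc⟩ := local_unit
  refine ⟨C * ENNReal.ofReal (Real.exp 3), ENNReal.mul_ne_top hC ENNReal.ofReal_ne_top, ?_⟩
  intro g hg a
  have hgm := hg.continuous.measurable
  set r : ℝ := (1 + ‖a‖)⁻¹ with hr
  have h1a : 0 < 1 + ‖a‖ := by positivity
  have hr0 : 0 < r := by positivity
  have hr1 : r ≤ 1 := inv_le_one_of_one_le₀ (by linarith [norm_nonneg a])
  have hra : r * (1 + ‖a‖) = 1 := inv_mul_cancel₀ h1a.ne'
  have h1 := hloc (fun w => 1 + g (a + r * w)) (by fun_prop)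
  have hd : HasDerivAt (fun w : ℂ => 1 + g (a + r * w)) (deriv g a * r) 0 := by
    have e1 : HasDerivAt (fun w : ℂ => a + r * w) (r : ℂ) 0 := by
      simpa using ((hasDerivAt_id (0:ℂ)).const_mul (r:ℂ)).const_add a
    have e2 : HasDerivAt g (deriv g a) ((fun w : ℂ => a + r * w) 0) := by
      simpa using (hg a).hasDerivAt
    exact (e2.comp 0 e1).const_add 1
  rw [hd.deriv, enorm_mul, mul_pow] at h1
  have e3 : ‖(r:ℂ)‖ₑ ^ 2 = ENNReal.ofReal (r ^ 2) := by
    rw [← ofReal_norm, ← ENNReal.ofReal_pow (norm_nonneg _)]; simp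
  have h2 : ∫⁻ w in ball (0:ℂ) 1, ‖‖1 + g (a + r * w)‖ - 1‖ₑ ^ 2 =
      ENNReal.ofReal (r ^ 2)⁻¹ * ∫⁻ z in ball a r, ‖‖1 + g z‖ - 1‖ₑ ^ 2 := by
    rw [← lintegral_indicator measurableSet_ball, ← lintegral_indicator measurableSet_ball,
      ← scale_lint _ a r hr0]
    congr 1; ext w
    have : a + r * w ∈ ball a r ↔ w ∈ ball (0:ℂ) 1 := by
      simp only [mem_ball, dist_eq_norm, add_sub_cancel_left, sub_zero, norm_mul, Complex.norm_real,
        Real.norm_of_nonneg hr0.le]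
      exact mul_lt_iff_lt_one_right hr0
    by_cases hw : w ∈ ball (0:ℂ) 1
    · rw [indicator_of_mem hw, indicator_of_mem (this.2 hw)]
    · rw [indicator_of_notMem hw, indicator_of_notMem (fun h => hw (this.1 h))]
  rw [e3, h2] at h1
  have h3 : (∫⁻ z in ball a r, ‖‖1 + g z‖ - 1‖ₑ ^ 2) * ENNReal.ofReal (Real.exp (-‖a‖ ^ 2)) ≤
      ENNReal.ofReal (Real.exp 3) * ∫⁻ z in ball a r,
        ‖‖1 + g z‖ - 1‖ₑ ^ 2 * ENNReal.ofReal (Real.exp (-‖z‖ ^ 2)) := by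
    rw [← lintegral_mul_const _ (by fun_prop), ← lintegral_const_mul _ (by fun_prop)]
    apply setLIntegral_mono (by fun_prop)
    intro z hz
    rw [mul_left_comm, ← ENNReal.ofReal_mul (by positivity)]
    gcongr
    rw [← Real.exp_add]
    apply Real.exp_le_exp.2
    rw [mem_ball, dist_eq_norm] at hz
    have h4 : ‖z‖ ≤ ‖a‖ + r := by
      have := norm_sub_norm_le z a; linarith
    have h5 : ‖z‖ ^ 2 ≤ (‖a‖ + r) ^ 2 := by gcongr
    have h6 := norm_nonneg a
    nlinarith
  have h4 : ENNReal.ofReal ((1 + ‖a‖) ^ 2) * ENNReal.ofReal (r ^ 2) = 1 := by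
    rw [← ENNReal.ofReal_mul (by positivity), ← mul_pow, mul_comm, hra]; simp
  have h5 : ENNReal.ofReal ((1 + ‖a‖) ^ 2) * ENNReal.ofReal (r ^ 2)⁻¹ = ENNReal.ofReal ((1 + ‖a‖) ^ 4) := by
    rw [← ENNReal.ofReal_mul (by positivity), hr, inv_pow, inv_inv]; congr 1; ring
  calc _ = ENNReal.ofReal ((1 + ‖a‖) ^ 2) * (‖deriv g a‖ₑ ^ 2 * ENNReal.ofReal (r ^ 2)) *
        ENNReal.ofReal (Real.exp (-‖a‖ ^ 2)) := by
        rw [mul_left_comm, h4, mul_one]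
    _ ≤ ENNReal.ofReal ((1 + ‖a‖) ^ 2) * (C * (ENNReal.ofReal (r ^ 2)⁻¹ *
        ∫⁻ z in ball a r, ‖‖1 + g z‖ - 1‖ₑ ^ 2)) * ENNReal.ofReal (Real.exp (-‖a‖ ^ 2)) := by gcongr
    _ = C * (ENNReal.ofReal ((1 + ‖a‖) ^ 2) * ENNReal.ofReal (r ^ 2)⁻¹) *
        ((∫⁻ z in ball a r, ‖‖1 + g z‖ - 1‖ₑ ^ 2) * ENNReal.ofReal (Real.exp (-‖a‖ ^ 2))) := by ring
    _ ≤ C * (ENNReal.ofReal ((1 + ‖a‖) ^ 4)) * (ENNReal.ofReal (Real.exp 3) * ∫⁻ z in ball a r,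
        ‖‖1 + g z‖ - 1‖ₑ ^ 2 * ENNReal.ofReal (Real.exp (-‖z‖ ^ 2))) := by rw [h5]; gcongr
    _ = _ := by ring

lemma fubini_ball (φ : ℂ → ℝ≥0∞) (hφ : Measurable φ) :
    ∫⁻ a : ℂ, ENNReal.ofReal ((1 + ‖a‖) ^ 2) * ∫⁻ z in ball a (1 + ‖a‖)⁻¹, φ z ≤
      ENNReal.ofReal (16 * Real.pi) * ∫⁻ z, φ z := by
  let S : Set (ℂ × ℂ) := {p | dist p.2 p.1 < (1 + ‖p.1‖)⁻¹}
  have hS : MeasurableSet S := by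
    apply measurableSet_lt <;> fun_prop
  have key : ∀ a z : ℂ, (ball a (1 + ‖a‖)⁻¹).indicator φ z = S.indicator (fun p => φ p.2) (a, z) := by
    intro a z; simp [indicator, S]
  calc _ = ∫⁻ a : ℂ, ∫⁻ z, ENNReal.ofReal ((1 + ‖a‖) ^ 2) * S.indicator (fun p => φ p.2) (a, z) := by
        congr 1; ext a
        rw [← lintegral_indicator measurableSet_ball, ← lintegral_const_mul _ (hφ.indicator measurableSet_ball)]
        simp only [key]
    _ = ∫⁻ z : ℂ, ∫⁻ a, ENNReal.ofReal ((1 + ‖a‖) ^ 2) * S.indicator (fun p => φ p.2) (a, z) := by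
        apply lintegral_lintegral_swap
        apply Measurable.aemeasurable
        simp only [Function.uncurry_def]
        apply Measurable.mul (by fun_prop)
        exact (hφ.comp measurable_snd).indicator hS
    _ ≤ ∫⁻ z : ℂ, ENNReal.ofReal (16 * Real.pi) * φ z := by
        apply lintegral_mono
        intro z
        have h1z : 0 < 1 + ‖z‖ := by positivity
        calc _ ≤ ∫⁻ a : ℂ, (ball z (2 / (1 + ‖z‖))).indicator
              (fun _ => ENNReal.ofReal (4 * (1 + ‖z‖) ^ 2) * φ z) a := by
              apply lintegral_mono
              intro a
              by_cases h : (a, z) ∈ S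
              · have h' : dist z a < (1 + ‖a‖)⁻¹ := h
                have h1a : 1 ≤ 1 + ‖a‖ := by linarith [norm_nonneg a]
                have hle : (1 + ‖a‖)⁻¹ ≤ 1 := inv_le_one_of_one_le₀ h1a
                rw [dist_eq_norm] at h'
                have h2 := norm_sub_norm_le z a
                have h3 := norm_sub_norm_le a z
                rw [norm_sub_rev] at h3
                have h4 : 1 + ‖z‖ ≤ 2 * (1 + ‖a‖) := by linarith [norm_nonneg a]
                have h5 : 1 + ‖a‖ ≤ 2 * (1 + ‖z‖) := by linarith [norm_nonneg z]
                have hm : a ∈ ball z (2 / (1 + ‖z‖)) := by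
                  rw [mem_ball, dist_comm, dist_eq_norm]
                  refine h'.trans_le ?_
                  rw [inv_eq_one_div, div_le_div_iff₀ (by linarith) h1z]; linarith
                rw [indicator_of_mem hm]
                simp only
                rw [indicator_of_mem h]
                gcongr
                nlinarith
              · simp only
                rw [indicator_of_notMem h]; simp
          _ = _ := by
              rw [lintegral_indicator measurableSet_ball, setLIntegral_const, Complex.volume_ball,
                ← ENNReal.ofReal_pow (by positivity), ← ENNReal.ofReal_coe_nnreal, NNReal.coe_real_pi,
                ← ENNReal.ofReal_mul (by positivity), mul_right_comm, ← ENNReal.ofReal_mul (by positivity)]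
              congr 2
              field_simp
              norm_num
    _ = _ := lintegral_const_mul _ hφ

lemma one_dim : ∃ C : ℝ≥0∞, C ≠ ⊤ ∧ ∀ g : ℂ → ℂ, Differentiable ℂ g →
    ∫⁻ z, ‖g z - g 0‖ₑ ^ 2 * ENNReal.ofReal (Real.exp (-‖z‖ ^ 2)) ≤
      C * ∫⁻ z, ‖‖1 + g z‖ - 1‖ₑ ^ 2 * ENNReal.ofReal (Real.exp (-‖z‖ ^ 2)) := by
  obtain ⟨C, hC, hloc⟩ := local_scaled
  set K : ℝ≥0∞ := ∫⁻ z : ℂ, ENNReal.ofReal (Real.exp (-‖z‖ ^ 2)) with hK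
  have hKt : K ≠ ⊤ := by
    have h := GaussianFourier.integrable_cexp_neg_mul_sq_norm_add (V := ℂ) (b := 1) (by simp) 0 0
    have h2 : Integrable (fun z : ℂ => Real.exp (-‖z‖ ^ 2)) := by
      refine h.norm.congr (Filter.Eventually.of_forall fun z => ?_)
      simp only
      rw [Complex.norm_exp]
      simp [← Complex.ofReal_pow]
    exact (h2.lintegral_lt_top).ne
  set A := C * ENNReal.ofReal (16 * Real.exp 1) with hA
  set B := C * 4 * ENNReal.ofReal (16 * Real.pi) with hB
  have hAt : A ≠ ⊤ := ENNReal.mul_ne_top hC ENNReal.ofReal_ne_top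
  have hBt : B ≠ ⊤ := ENNReal.mul_ne_top (ENNReal.mul_ne_top hC (by norm_num)) ENNReal.ofReal_ne_top
  refine ⟨2 * A * K + 2 * B, ?_, ?_⟩
  · exact ENNReal.add_ne_top.2 ⟨ENNReal.mul_ne_top (ENNReal.mul_ne_top (by norm_num) hAt) hKt,
      ENNReal.mul_ne_top (by norm_num) hBt⟩
  intro g hg
  have hgm := hg.continuous.measurable
  have hdc : Continuous (deriv g) := (hg.contDiff (n := 1)).continuous_deriv le_rfl
  have hdm := hdc.measurable
  set φ : ℂ → ℝ≥0∞ := fun z => ‖‖1 + g z‖ - 1‖ₑ ^ 2 * ENNReal.ofReal (Real.exp (-‖z‖ ^ 2)) with hφ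
  have hφm : Measurable φ := by fun_prop
  set H := ∫⁻ z, φ z with hH
  let s : Set ℂ := {y | 1 ≤ ‖y‖}
  have hs : MeasurableSet s := measurableSet_le (by fun_prop) (by fun_prop)
  let k : ℂ → ℝ≥0∞ := s.indicator (fun y => ‖deriv g y‖ₑ)
  have hk : Measurable k := Measurable.indicator (by fun_prop) hs
  have hk0 : k 0 = 0 := by simp [k, s]
  -- pointwise bound near the origin
  have hnear : ∀ y : ℂ, ‖y‖ < 1 → ‖deriv g y‖ₑ ^ 2 ≤ A * H := by
    intro y hy
    have h1 := hloc g hg y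
    have h2 : ∫⁻ z in ball y (1 + ‖y‖)⁻¹, φ z ≤ H := setLIntegral_le_lintegral _ _
    have h3 : ENNReal.ofReal (Real.exp 1) * ENNReal.ofReal (Real.exp (-‖y‖ ^ 2)) ≥ 1 := by
      rw [← ENNReal.ofReal_mul (by positivity), ← Real.exp_add]
      apply ENNReal.one_le_ofReal.2
      apply Real.one_le_exp
      nlinarith [norm_nonneg y]
    have h4 : ENNReal.ofReal ((1 + ‖y‖) ^ 4) ≤ ENNReal.ofReal 16 := by
      apply ENNReal.ofReal_le_ofReal
      calc (1 + ‖y‖) ^ 4 ≤ (1 + 1) ^ 4 := by gcongr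
        _ = 16 := by norm_num
    calc ‖deriv g y‖ₑ ^ 2 = ‖deriv g y‖ₑ ^ 2 * 1 := by simp
      _ ≤ ‖deriv g y‖ₑ ^ 2 * (ENNReal.ofReal (Real.exp 1) * ENNReal.ofReal (Real.exp (-‖y‖ ^ 2))) := by
          gcongr
      _ = ENNReal.ofReal (Real.exp 1) * (‖deriv g y‖ₑ ^ 2 * ENNReal.ofReal (Real.exp (-‖y‖ ^ 2))) := by
          ring
      _ ≤ ENNReal.ofReal (Real.exp 1) * (C * (ENNReal.ofReal 16 * H)) := by
          refine mul_le_mul_right (h1.trans (mul_le_mul_right ?_ _)) _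
          exact mul_le_mul' h4 h2
      _ = A * H := by
          rw [hA, ENNReal.ofReal_mul (by norm_num)]; ring
  set T := (A * H) ^ (1 / 2 : ℝ) with hT
  have hT2 : T ^ 2 = A * H := by
    rw [hT, ← ENNReal.rpow_natCast, ← ENNReal.rpow_mul]; norm_num
  have hTn : ∀ y : ℂ, ‖y‖ < 1 → ‖deriv g y‖ₑ ≤ T := by
    intro y hy
    have := hnear y hy
    rw [← hT2] at this
    exact (ENNReal.pow_le_pow_left_iff (by norm_num)).1 this
  -- path splitting
  have hpath : ∀ z : ℂ, ‖g z - g 0‖ₑ ≤ T + ∫⁻ t in Ioc (0:ℝ) 1, ‖z‖ₑ * k (t * z) := by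
    intro z
    refine (path_bound g hg z).trans ?_
    by_cases hz : z = 0
    · simp [hz]
    have hz0 : 0 < ‖z‖ := norm_pos_iff.2 hz
    calc _ ≤ ∫⁻ t in Ioc (0:ℝ) 1, ((Ioc (0:ℝ) ‖z‖⁻¹).indicator (fun _ => ‖z‖ₑ * T) t + ‖z‖ₑ * k (t * z)) := by
          apply setLIntegral_mono
          · exact (Measurable.indicator (by fun_prop) measurableSet_Ioc).add (by fun_prop)
          intro t ht
          have hn : ‖(t:ℂ) * z‖ = t * ‖z‖ := by
            rw [norm_mul, Complex.norm_real, Real.norm_of_nonneg ht.1.le]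
          by_cases h : 1 ≤ ‖(t:ℂ) * z‖
          · have : k (t * z) = ‖deriv g (t * z)‖ₑ := indicator_of_mem (s := s) h _
            rw [this]; exact le_add_self
          · push Not at h
            have hm : t ∈ Ioc (0:ℝ) ‖z‖⁻¹ := by
              refine ⟨ht.1, ?_⟩
              rw [hn] at h
              rw [inv_eq_one_div, le_div_iff₀ hz0]; exact h.le
            rw [indicator_of_mem hm]
            refine le_trans ?_ le_self_add
            gcongr
            exact hTn _ h
      _ = (∫⁻ t in Ioc (0:ℝ) 1, (Ioc (0:ℝ) ‖z‖⁻¹).indicator (fun _ => ‖z‖ₑ * T) t) +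
            ∫⁻ t in Ioc (0:ℝ) 1, ‖z‖ₑ * k (t * z) :=
          lintegral_add_left (Measurable.indicator (by fun_prop) measurableSet_Ioc) _
      _ ≤ _ := by
          gcongr
          refine (setLIntegral_le_lintegral _ _).trans ?_
          rw [lintegral_indicator measurableSet_Ioc, setLIntegral_const, Real.volume_Ioc, sub_zero,
            mul_right_comm, ← ofReal_norm, ← ENNReal.ofReal_mul (by positivity),
            mul_inv_cancel₀ hz0.ne']
          simp
  -- the far part
  have hfar : ∫⁻ y : ℂ, k y ^ 2 * ENNReal.ofReal (Real.exp (-‖y‖ ^ 2) / ‖y‖ ^ 2) ≤ B * H := by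
    calc _ ≤ ∫⁻ a : ℂ, C * 4 * (ENNReal.ofReal ((1 + ‖a‖) ^ 2) * ∫⁻ z in ball a (1 + ‖a‖)⁻¹, φ z) := by
          apply lintegral_mono
          intro a
          by_cases h : a ∈ s
          · have h1 : 1 ≤ ‖a‖ := h
            have hka : k a = ‖deriv g a‖ₑ := indicator_of_mem h _
            simp only
            rw [hka, div_eq_mul_inv, ENNReal.ofReal_mul (by positivity), ← mul_assoc]
            calc _ ≤ C * (ENNReal.ofReal ((1 + ‖a‖) ^ 4) * ∫⁻ z in ball a (1 + ‖a‖)⁻¹, φ z) *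
                  ENNReal.ofReal (‖a‖ ^ 2)⁻¹ := by
                  exact mul_le_mul_left (hloc g hg a) _
              _ = C * (ENNReal.ofReal ((1 + ‖a‖) ^ 4) * ENNReal.ofReal (‖a‖ ^ 2)⁻¹) *
                  (∫⁻ z in ball a (1 + ‖a‖)⁻¹, φ z) := by ring
              _ ≤ C * (4 * ENNReal.ofReal ((1 + ‖a‖) ^ 2)) *
                  (∫⁻ z in ball a (1 + ‖a‖)⁻¹, φ z) := by
                  refine mul_le_mul_left (mul_le_mul_right ?_ _) _
                  have : (4:ℝ≥0∞) = ENNReal.ofReal 4 := by simp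
                  rw [this, ← ENNReal.ofReal_mul (by positivity), ← ENNReal.ofReal_mul (by positivity)]
                  apply ENNReal.ofReal_le_ofReal
                  rw [← div_eq_mul_inv, div_le_iff₀ (by positivity)]
                  have h2 : (1 + ‖a‖) ^ 2 ≤ (2 * ‖a‖) ^ 2 := by gcongr; linarith
                  calc (1 + ‖a‖) ^ 4 = (1 + ‖a‖) ^ 2 * (1 + ‖a‖) ^ 2 := by ring
                    _ ≤ (1 + ‖a‖) ^ 2 * (2 * ‖a‖) ^ 2 := by gcongr
                    _ = _ := by ring
              _ = _ := by ring
          · have : k a = 0 := indicator_of_notMem h _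
            simp [this]
      _ = C * 4 * ∫⁻ a : ℂ, (ENNReal.ofReal ((1 + ‖a‖) ^ 2) * ∫⁻ z in ball a (1 + ‖a‖)⁻¹, φ z) :=
          lintegral_const_mul' _ _ (ENNReal.mul_ne_top hC (by norm_num))
      _ ≤ C * 4 * (ENNReal.ofReal (16 * Real.pi) * H) := by
          gcongr; exact fubini_ball φ hφm
      _ = _ := by rw [hB]; ring
  have hsq : ∀ a b : ℝ≥0∞, (a + b) ^ 2 ≤ 2 * a ^ 2 + 2 * b ^ 2 := by
    intro a b
    have := ENNReal.rpow_add_le_mul_rpow_add_rpow a b (p := 2) (by norm_num)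
    norm_num at this
    rw [← mul_add]; exact this
  have hIm : Measurable (fun z : ℂ => ∫⁻ t in Ioc (0:ℝ) 1, ‖z‖ₑ * k (t * z)) := by
    apply Measurable.lintegral_prod_right' (f := fun p : ℂ × ℝ => ‖p.1‖ₑ * k (p.2 * p.1))
    fun_prop
  calc _ ≤ ∫⁻ z : ℂ, (2 * T ^ 2 * ENNReal.ofReal (Real.exp (-‖z‖ ^ 2)) +
        2 * ((∫⁻ t in Ioc (0:ℝ) 1, ‖z‖ₑ * k (t * z)) ^ 2 * ENNReal.ofReal (Real.exp (-‖z‖ ^ 2)))) := by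
        apply lintegral_mono
        intro z
        simp only
        rw [← mul_assoc, ← add_mul]
        gcongr
        refine le_trans ?_ (hsq _ _)
        gcongr
        exact hpath z
    _ = 2 * T ^ 2 * K + 2 * ∫⁻ z : ℂ, ((∫⁻ t in Ioc (0:ℝ) 1, ‖z‖ₑ * k (t * z)) ^ 2 *
          ENNReal.ofReal (Real.exp (-‖z‖ ^ 2))) := by
        rw [lintegral_add_left (by fun_prop), lintegral_const_mul _ (by fun_prop),
          lintegral_const_mul _ (by fun_prop)]
    _ ≤ 2 * T ^ 2 * K + 2 * (B * H) := by
        gcongr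
        exact (hardy_k k hk hk0).trans hfar
    _ = _ := by rw [hT2]; ring

lemma split_lint (d : ℕ) (F : (Fin (d + 1) → ℂ) → ℝ≥0∞) (hF : Measurable F) :
    ∫⁻ z, F z = ∫⁻ a : ℂ, ∫⁻ y : Fin d → ℂ, F (Fin.cons a y) := by
  have h := (volume_preserving_piFinSuccAbove (fun _ : Fin (d + 1) => ℂ) 0).symm
  rw [← h.lintegral_comp hF]
  rw [Measure.volume_eq_prod, lintegral_prod]
  · have e : ∀ (a : ℂ) (y : Fin d → ℂ),
        (MeasurableEquiv.piFinSuccAbove (fun _ : Fin (d + 1) => ℂ) 0).symm (a, y) = Fin.cons a y := by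
      intro a y
      simp [MeasurableEquiv.piFinSuccAbove, Fin.insertNthEquiv]
    simp only [e]
  · exact (hF.comp h.measurable).aemeasurable

lemma cons_cont (d : ℕ) : Continuous (fun p : ℂ × (Fin d → ℂ) => (Fin.cons p.1 p.2 : Fin (d + 1) → ℂ)) := by
  apply continuous_pi
  intro i
  refine Fin.cases ?_ (fun j => ?_) i
  · simpa using continuous_fst
  · simp only [Fin.cons_succ]; fun_prop

lemma cons_diff_left (d : ℕ) (y : Fin d → ℂ) :
    Differentiable ℂ (fun a : ℂ => (Fin.cons a y : Fin (d + 1) → ℂ)) := by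
  apply differentiable_pi.2
  intro i
  refine Fin.cases ?_ (fun j => ?_) i
  · simp only [Fin.cons_zero]; fun_prop
  · simp only [Fin.cons_succ]; fun_prop

lemma cons_diff_right (d : ℕ) (a : ℂ) :
    Differentiable ℂ (fun y : Fin d → ℂ => (Fin.cons a y : Fin (d + 1) → ℂ)) := by
  apply differentiable_pi.2
  intro i
  refine Fin.cases ?_ (fun j => ?_) i
  · simp only [Fin.cons_zero]; fun_prop
  · simp only [Fin.cons_succ]; fun_prop

noncomputable def Gd (d : ℕ) (z : Fin d → ℂ) : ℝ≥0∞ :=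
  ENNReal.ofReal (Real.exp (-∑ q, ‖z q‖ ^ 2))

lemma Gd_meas (d : ℕ) : Measurable (Gd d) := by
  unfold Gd; fun_prop

lemma Gd_cons (d : ℕ) (a : ℂ) (y : Fin d → ℂ) :
    Gd (d + 1) (Fin.cons a y) = ENNReal.ofReal (Real.exp (-‖a‖ ^ 2)) * Gd d y := by
  unfold Gd
  rw [← ENNReal.ofReal_mul (by positivity), ← Real.exp_add, Fin.sum_univ_succ]
  simp only [Fin.cons_zero, Fin.cons_succ]
  congr 2; ring

lemma cons_zero_zero (d : ℕ) : (Fin.cons 0 0 : Fin (d + 1) → ℂ) = 0 := by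
  ext i
  refine Fin.cases ?_ (fun j => ?_) i <;> simp

lemma mean_one (V : ℂ → ℂ) (hV : Differentiable ℂ V) :
    ‖V 0‖ₑ ^ 2 * ∫⁻ a : ℂ, ENNReal.ofReal (Real.exp (-‖a‖ ^ 2)) ≤
      ∫⁻ a : ℂ, ‖V a‖ₑ ^ 2 * ENNReal.ofReal (Real.exp (-‖a‖ ^ 2)) := by
  have hm : Measurable V := hV.continuous.measurable
  rw [← lintegral_const_mul _ (by fun_prop)]
  apply rot_lint _ _ (by fun_prop) (by fun_prop)
  intro z
  have h := circ_mean V hV z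
  calc _ = (‖V 0‖ₑ ^ 2 * ENNReal.ofReal (2 * Real.pi)) * ENNReal.ofReal (Real.exp (-‖z‖ ^ 2)) := by
        ring
    _ ≤ _ := mul_le_mul_left h _
    _ = _ := by
      rw [← lintegral_mul_const _ (by fun_prop)]
      simp

lemma mean_d (d : ℕ) : ∀ V : (Fin d → ℂ) → ℂ, Differentiable ℂ V →
    ‖V 0‖ₑ ^ 2 * ∫⁻ z, Gd d z ≤ ∫⁻ z, ‖V z‖ₑ ^ 2 * Gd d z := by
  induction d with
  | zero =>
    intro V hV
    rw [← lintegral_const_mul _ (Gd_meas _)]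
    apply lintegral_mono
    intro z
    rw [Subsingleton.elim z 0]
  | succ d ih =>
    intro V hV
    have hVm : Measurable V := hV.continuous.measurable
    have hG := Gd_meas (d + 1)
    have hG' := Gd_meas d
    have hVc : Measurable (fun a : ℂ => V (Fin.cons a 0)) :=
      (hV.comp (cons_diff_left d 0)).continuous.measurable
    rw [split_lint d _ hG, split_lint d _ (by fun_prop)]
    simp only [Gd_cons]
    have e1 : ∀ a : ℂ, ∫⁻ y : Fin d → ℂ, ENNReal.ofReal (Real.exp (-‖a‖ ^ 2)) * Gd d y =
        ENNReal.ofReal (Real.exp (-‖a‖ ^ 2)) * ∫⁻ y, Gd d y := fun a =>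
      lintegral_const_mul _ hG'
    simp only [e1]
    rw [lintegral_mul_const _ (by fun_prop), ← mul_assoc]
    have h1 := mean_one (fun a => V (Fin.cons a 0)) (hV.comp (cons_diff_left d 0))
    simp only [cons_zero_zero] at h1
    refine (mul_le_mul_left h1 _).trans ?_
    rw [← lintegral_mul_const _ (by fun_prop)]
    apply lintegral_mono
    intro a
    have h2 := ih (fun y => V (Fin.cons a y)) (hV.comp (cons_diff_right d a))
    have hVr : Measurable (fun y => V (Fin.cons a y)) :=
      (hV.comp (cons_diff_right d a)).continuous.measurable
    calc _ = ENNReal.ofReal (Real.exp (-‖a‖ ^ 2)) * (‖V (Fin.cons a 0)‖ₑ ^ 2 * ∫⁻ y, Gd d y) := by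
          ring
      _ ≤ _ := mul_le_mul_right h2 _
      _ = _ := by
        rw [← lintegral_const_mul _ (by fun_prop)]
        refine lintegral_congr fun y => ?_; ring

lemma sq_add_le (a b : ℝ≥0∞) : (a + b) ^ 2 ≤ 2 * a ^ 2 + 2 * b ^ 2 := by
  have := ENNReal.rpow_add_le_mul_rpow_add_rpow a b (p := 2) (by norm_num)
  norm_num at this
  rw [← mul_add]; exact this

lemma main_d (d : ℕ) : ∃ C : ℝ≥0∞, C ≠ ∞ ∧ ∀ U : (Fin d → ℂ) → ℂ, Differentiable ℂ U →
    ∫⁻ z, ‖U z - U 0‖ₑ ^ 2 * Gd d z ≤ C * ∫⁻ z, ‖‖1 + U z‖ - 1‖ₑ ^ 2 * Gd d z := by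
  induction d with
  | zero =>
    refine ⟨0, by simp, fun U hU => ?_⟩
    have : ∀ z : Fin 0 → ℂ, U z = U 0 := fun z => by rw [Subsingleton.elim z 0]
    simp [this]
  | succ d ih =>
    obtain ⟨C, hC, ih⟩ := ih
    obtain ⟨D, hD, h1⟩ := one_dim
    refine ⟨2 * C + 2 * D, by finiteness, fun U hU => ?_⟩
    have hUm : Measurable U := hU.continuous.measurable
    have hG := Gd_meas (d + 1)
    have hG' := Gd_meas d
    have hUp : Measurable (fun p : ℂ × (Fin d → ℂ) => U (Fin.cons p.1 p.2)) :=
      (hU.continuous.comp (cons_cont d)).measurable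
    have hUr : ∀ a : ℂ, Measurable (fun y => U (Fin.cons a y)) := fun a =>
      (hU.comp (cons_diff_right d a)).continuous.measurable
    have hUl : ∀ y : Fin d → ℂ, Measurable (fun a => U (Fin.cons a y)) := fun y =>
      (hU.comp (cons_diff_left d y)).continuous.measurable
    have hU0 : Measurable (fun p : ℂ × (Fin d → ℂ) => U (Fin.cons p.1 0)) :=
      (hUl 0).comp measurable_fst
    have hU1 : Measurable (fun p : ℂ × (Fin d → ℂ) => U (Fin.cons 0 p.2)) :=
      (hUr 0).comp measurable_snd
    rw [split_lint d _ (by fun_prop), split_lint d _ (by fun_prop)]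
    simp only [Gd_cons]
    set W : ℂ → ℝ≥0∞ := fun a => ENNReal.ofReal (Real.exp (-‖a‖ ^ 2)) with hW
    have hWm : Measurable W := by rw [hW]; fun_prop
    set H := ∫⁻ a : ℂ, ∫⁻ y : Fin d → ℂ, ‖‖1 + U (Fin.cons a y)‖ - 1‖ₑ ^ 2 * (W a * Gd d y) with hH
    have T1 : ∫⁻ a : ℂ, ∫⁻ y : Fin d → ℂ, ‖U (Fin.cons a y) - U (Fin.cons a 0)‖ₑ ^ 2 * (W a * Gd d y)
        ≤ C * H := by
      rw [hH, ← lintegral_const_mul' _ _ hC]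
      apply lintegral_mono
      intro a
      have h2 := ih (fun y => U (Fin.cons a y)) (hU.comp (cons_diff_right d a))
      have hr := hUr a
      calc _ = W a * ∫⁻ y : Fin d → ℂ, ‖U (Fin.cons a y) - U (Fin.cons a 0)‖ₑ ^ 2 * Gd d y := by
            rw [← lintegral_const_mul _ (by fun_prop)]
            refine lintegral_congr fun y => ?_; ring
        _ ≤ _ := mul_le_mul_right h2 _
        _ = C * (W a * ∫⁻ y : Fin d → ℂ, ‖‖1 + U (Fin.cons a y)‖ - 1‖ₑ ^ 2 * Gd d y) := by ring
        _ = _ := by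
            rw [← lintegral_const_mul _ (by fun_prop)]
            congr 2; ext y; ring
    have T2 : ∫⁻ a : ℂ, ∫⁻ y : Fin d → ℂ, ‖U (Fin.cons a 0) - U 0‖ₑ ^ 2 * (W a * Gd d y)
        ≤ D * H := by
      calc _ ≤ ∫⁻ a : ℂ, ∫⁻ y : Fin d → ℂ, ‖U (Fin.cons a y) - U (Fin.cons 0 y)‖ₑ ^ 2 * (W a * Gd d y) := by
            apply lintegral_mono
            intro a
            have h2 := mean_d d (fun y => U (Fin.cons a y) - U (Fin.cons 0 y))
              ((hU.comp (cons_diff_right d a)).sub (hU.comp (cons_diff_right d 0)))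
            simp only [cons_zero_zero] at h2
            have hr := hUr a
            have hr0 := hUr 0
            calc _ = W a * (‖U (Fin.cons a 0) - U 0‖ₑ ^ 2 * ∫⁻ y, Gd d y) := by
                  rw [← lintegral_const_mul _ hG', ← lintegral_const_mul _ (by fun_prop)]
                  refine lintegral_congr fun y => ?_; ring
              _ ≤ _ := mul_le_mul_right h2 _
              _ = _ := by
                  rw [← lintegral_const_mul _ (by fun_prop)]
                  refine lintegral_congr fun y => ?_; ring
        _ = ∫⁻ y : Fin d → ℂ, ∫⁻ a : ℂ, ‖U (Fin.cons a y) - U (Fin.cons 0 y)‖ₑ ^ 2 * (W a * Gd d y) := by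
            apply lintegral_lintegral_swap
            apply Measurable.aemeasurable
            simp only [Function.uncurry_def]
            fun_prop
        _ ≤ ∫⁻ y : Fin d → ℂ, D * ∫⁻ a : ℂ, ‖‖1 + U (Fin.cons a y)‖ - 1‖ₑ ^ 2 * (W a * Gd d y) := by
            apply lintegral_mono
            intro y
            have h2 := h1 (fun a => U (Fin.cons a y)) (hU.comp (cons_diff_left d y))
            have hl := hUl y
            simp only [← mul_assoc]
            rw [lintegral_mul_const _ (by fun_prop), lintegral_mul_const _ (by fun_prop), ← mul_assoc]
            exact mul_le_mul_left h2 _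
        _ = D * ∫⁻ y : Fin d → ℂ, ∫⁻ a : ℂ, ‖‖1 + U (Fin.cons a y)‖ - 1‖ₑ ^ 2 * (W a * Gd d y) :=
            lintegral_const_mul' _ _ hD
        _ = D * H := by
            rw [hH]
            congr 1
            symm
            apply lintegral_lintegral_swap
            apply Measurable.aemeasurable
            simp only [Function.uncurry_def]
            fun_prop
    have hm1 : Measurable (fun p : ℂ × (Fin d → ℂ) =>
        ‖U (Fin.cons p.1 p.2) - U (Fin.cons p.1 0)‖ₑ ^ 2 * (W p.1 * Gd d p.2)) := by fun_prop
    calc _ ≤ ∫⁻ a : ℂ, ∫⁻ y : Fin d → ℂ,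
          (2 * (‖U (Fin.cons a y) - U (Fin.cons a 0)‖ₑ ^ 2 * (W a * Gd d y)) +
            2 * (‖U (Fin.cons a 0) - U 0‖ₑ ^ 2 * (W a * Gd d y))) := by
          apply lintegral_mono
          intro a
          apply lintegral_mono
          intro y
          have : ‖U (Fin.cons a y) - U 0‖ₑ ≤
              ‖U (Fin.cons a y) - U (Fin.cons a 0)‖ₑ + ‖U (Fin.cons a 0) - U 0‖ₑ := by
            have h := enorm_add_le (U (Fin.cons a y) - U (Fin.cons a 0)) (U (Fin.cons a 0) - U 0)
            simpa using h
          calc _ ≤ (2 * ‖U (Fin.cons a y) - U (Fin.cons a 0)‖ₑ ^ 2 +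
                2 * ‖U (Fin.cons a 0) - U 0‖ₑ ^ 2) * (W a * Gd d y) :=
                mul_le_mul_left ((pow_le_pow_left' this 2).trans (sq_add_le _ _)) _
            _ = _ := by ring
      _ = 2 * (∫⁻ a : ℂ, ∫⁻ y : Fin d → ℂ, ‖U (Fin.cons a y) - U (Fin.cons a 0)‖ₑ ^ 2 * (W a * Gd d y))
          + 2 * (∫⁻ a : ℂ, ∫⁻ y : Fin d → ℂ, ‖U (Fin.cons a 0) - U 0‖ₑ ^ 2 * (W a * Gd d y)) := by
          rw [← lintegral_const_mul' _ _ (by simp), ← lintegral_const_mul' _ _ (by simp),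
            ← lintegral_add_left]
          · congr 1; ext a
            rw [← lintegral_const_mul' _ _ (by simp), ← lintegral_const_mul' _ _ (by simp),
              ← lintegral_add_left]
            have hr := hUr a
            fun_prop
          · exact (Measurable.lintegral_prod_right' hm1).const_mul 2
      _ ≤ 2 * (C * H) + 2 * (D * H) := by
          exact add_le_add (mul_le_mul_right T1 _) (mul_le_mul_right T2 _)
      _ = _ := by ring

end Helpers

/-- **Orthogonal coercivity on `ℂ^d`.** For each `d ≥ 1` there is `C_d > 0` such that
every `U ∈ F²(ℂ^d)` with `U(0) = 0` satisfies `‖U‖_{F_d}² ≤ C_d² ‖ρ ∘ U‖_{F_d}²`. -/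
theorem stmt15 (d : ℕ) (hd : 1 ≤ d) :
    ∃ C : ℝ, 0 < C ∧
      ∀ U : (Fin d → ℂ) → ℂ, Differentiable ℂ U →
        Integrable (fun z : Fin d → ℂ => ‖U z‖ ^ 2 * Real.exp (-∑ q, ‖z q‖ ^ 2)) →
        U (fun _ => 0) = 0 →
        (gammaNormD d U) ^ 2 ≤ C ^ 2 * (gammaNormD d (fun z => ρ (U z))) ^ 2 := by
  obtain ⟨C, hC, h⟩ := main_d d
  refine ⟨C.toReal + 1, by positivity, fun U hU hI hU0 => ?_⟩
  have hU0' : U 0 = 0 := hU0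
  have h1 := h U hU
  simp only [hU0', sub_zero] at h1
  have hUc : Continuous U := hU.continuous
  have hI2 : Integrable (fun z : Fin d → ℂ => ‖ρ (U z)‖ ^ 2 * Real.exp (-∑ q, ‖z q‖ ^ 2)) := by
    refine hI.mono' ?_ ?_
    · apply Continuous.aestronglyMeasurable
      unfold ρ
      fun_prop
    · refine Filter.Eventually.of_forall fun z => ?_
      rw [Real.norm_of_nonneg (by positivity)]
      have : ‖ρ (U z)‖ ≤ ‖U z‖ := by
        unfold ρ
        rw [Real.norm_eq_abs, abs_abs]
        have := abs_norm_sub_norm_le (1 + U z) 1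
        simpa using this
      gcongr
  have e1 : ∀ z : Fin d → ℂ, ‖U z‖ₑ ^ 2 * Gd d z =
      ENNReal.ofReal (‖U z‖ ^ 2 * Real.exp (-∑ q, ‖z q‖ ^ 2)) := by
    intro z
    rw [Gd, ENNReal.ofReal_mul (by positivity), ENNReal.ofReal_pow (norm_nonneg _), ofReal_norm]
  have e2 : ∀ z : Fin d → ℂ, ‖‖1 + U z‖ - 1‖ₑ ^ 2 * Gd d z =
      ENNReal.ofReal (‖ρ (U z)‖ ^ 2 * Real.exp (-∑ q, ‖z q‖ ^ 2)) := by
    intro z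
    rw [Gd, ENNReal.ofReal_mul (by positivity), ENNReal.ofReal_pow (norm_nonneg _), ρ,
      Real.norm_eq_abs, abs_abs, ← Real.norm_eq_abs, ofReal_norm]
  simp only [e1, e2] at h1
  have n1 : ∀ z : Fin d → ℂ, 0 ≤ ‖U z‖ ^ 2 * Real.exp (-∑ q, ‖z q‖ ^ 2) := fun z => by positivity
  have n2 : ∀ z : Fin d → ℂ, 0 ≤ ‖ρ (U z)‖ ^ 2 * Real.exp (-∑ q, ‖z q‖ ^ 2) := fun z => by positivity
  rw [← ofReal_integral_eq_lintegral_ofReal hI (Filter.Eventually.of_forall n1),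
    ← ofReal_integral_eq_lintegral_ofReal hI2 (Filter.Eventually.of_forall n2),
    ← ENNReal.ofReal_toReal hC, ← ENNReal.ofReal_mul ENNReal.toReal_nonneg,
    ENNReal.ofReal_le_ofReal_iff (mul_nonneg ENNReal.toReal_nonneg (integral_nonneg n2))] at h1
  have p1 : (0:ℝ) ≤ 1 / Real.pi ^ d := by positivity
  unfold gammaNormD
  rw [Real.sq_sqrt (mul_nonneg p1 (integral_nonneg n1)),
    Real.sq_sqrt (mul_nonneg p1 (integral_nonneg n2))]
  have hc : C.toReal ≤ (C.toReal + 1) ^ 2 := by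
    nlinarith [ENNReal.toReal_nonneg (a := C)]
  have h2 := h1.trans (mul_le_mul_of_nonneg_right hc (integral_nonneg n2))
  have h3 := mul_le_mul_of_nonneg_left h2 p1
  linarith
end

section
/- Fix d ≥ 1. Let E ⊂ ℤ_{≥1} be a finite set with |E| = L, and let P(ω) = Σ_{n ∈ E} G_n(ω), where each G_n is the restriction to the unit sphere S^{2d−1} ⊂ ℂ^d of a homogeneous holomorphic polynomial of degree n on ℂ^d. Then ‖P‖_{L²(S^{2d−1})}² ≤ 144 L ‖ρ ∘ P‖_{L²(S^{2d−1})}², where the L² norms are with respect to the normalized surface measure on S^{2d−1}. -/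
open MeasureTheory

/-- The Euclidean (ℓ²) norm on `ℂ^d`: `‖z‖ = √(Σ_q |z_q|²)`. -/
noncomputable def l2norm {d : ℕ} (z : Fin d → ℂ) : ℝ :=
  Real.sqrt (∑ q, ‖z q‖ ^ 2)

/-- The standard Gaussian probability measure on `ℂ^d`,
`dγ_d(z) = (1/π^d) e^{−‖z‖²} dm(z)`. -/
noncomputable def gaussianCd (d : ℕ) : Measure (Fin d → ℂ) :=
  volume.withDensity fun z =>
    ENNReal.ofReal ((1 / Real.pi ^ d) * Real.exp (-∑ q, ‖z q‖ ^ 2))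

/-- The rotation-invariant probability measure `σ_d` on the unit sphere
`S^{2d−1} = {ω ∈ ℂ^d : ‖ω‖ = 1}`, realized as the pushforward of the Gaussian
measure on `ℂ^d` under the radial normalization `z ↦ z/‖z‖`. -/
noncomputable def sphereMeasure (d : ℕ) : Measure (Fin d → ℂ) :=
  (gaussianCd d).map fun z => (l2norm z)⁻¹ • z


lemma circ_core {Ω : Type*} [TopologicalSpace Ω] [CompactSpace Ω] [MeasurableSpace Ω]
    [BorelSpace Ω] (μ : Measure Ω) [IsProbabilityMeasure μ] (p : Ω → ℂ) (hp : Continuous p)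
    (L : ℝ) (hL : 1 ≤ L) (h1 : ∫ t, p t ∂μ = 0) (h2 : ∫ t, p t ^ 2 ∂μ = 0)
    (hM : ∀ t, ‖p t‖ ^ 2 ≤ L * ∫ t, ‖p t‖ ^ 2 ∂μ) :
    ∫ t, ‖p t‖ ^ 2 ∂μ ≤ 144 * L * ∫ t, ρ (p t) ^ 2 ∂μ := by
  have hint : ∀ {f : Ω → ℝ}, Continuous f → Integrable f μ := fun hf =>
    hf.integrable_of_hasCompactSupport (HasCompactSupport.of_compactSpace _)
  have hintc : ∀ {f : Ω → ℂ}, Continuous f → Integrable f μ := fun hf =>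
    hf.integrable_of_hasCompactSupport (HasCompactSupport.of_compactSpace _)
  have cρ : Continuous fun t => ρ (p t) ^ 2 := by unfold ρ; fun_prop
  have cn : Continuous fun t => ‖p t‖ ^ 2 := by fun_prop
  have cre : Continuous fun t => (p t).re := by fun_prop
  have cre2 : Continuous fun t => (p t ^ 2).re := by fun_prop
  have r1 : ∫ t, (p t).re ∂μ = 0 := by
    have := integral_re (hintc hp) (𝕜 := ℂ)
    simp only [RCLike.re_to_complex] at this
    rw [this, h1]; simp
  have r2 : ∫ t, (p t ^ 2).re ∂μ = 0 := by
    have := integral_re (hintc (f := fun t => p t ^ 2) (hp.pow 2)) (𝕜 := ℂ)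
    simp only [RCLike.re_to_complex] at this
    rw [this, h2]; simp
  have hD : 0 ≤ ∫ t, ρ (p t) ^ 2 ∂μ := integral_nonneg fun t => sq_nonneg _
  have key : ∀ w : ℂ, ‖1 + w‖ ^ 2 = 1 + 2 * w.re + ‖w‖ ^ 2 := by
    intro w
    rw [← Complex.normSq_eq_norm_sq, ← Complex.normSq_eq_norm_sq, Complex.normSq_apply,
      Complex.normSq_apply]
    simp; ring
  set x := ∫ t, ‖p t‖ ^ 2 ∂μ with hx
  set D := ∫ t, ρ (p t) ^ 2 ∂μ with hDd
  have hx0 : 0 ≤ x := integral_nonneg fun t => sq_nonneg _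
  rcases le_or_gt (L * x) (1/4) with hc | hc
  · have hpt : ∀ t, (3/4) * ‖p t‖ ^ 2 + (p t ^ 2).re ≤ (25/4) * ρ (p t) ^ 2 := by
      intro t
      have hb : ‖p t‖ ^ 2 ≤ 1/4 := (hM t).trans hc
      have hb' : ‖p t‖ ≤ 1/2 := by nlinarith [norm_nonneg (p t)]
      have hn : ‖1 + p t‖ ≤ 3/2 := by
        have := norm_add_le 1 (p t); simp at this; linarith
      have hk := key (p t)
      have hr : (p t ^ 2).re = 2 * (p t).re ^ 2 - ‖p t‖ ^ 2 := by
        rw [← Complex.normSq_eq_norm_sq, Complex.normSq_apply, sq (p t), Complex.mul_re]; ring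
      rw [hr]
      unfold ρ
      rw [sq_abs]
      have e : (‖1 + p t‖ - 1) ^ 2 * (‖1 + p t‖ + 1) ^ 2 = (2 * (p t).re + ‖p t‖ ^ 2) ^ 2 := by
        rw [← mul_pow]; congr 1; linarith
      have e2 : (‖1 + p t‖ + 1) ^ 2 ≤ 25/4 := by nlinarith [norm_nonneg (1 + p t)]
      have e3 := mul_le_mul_of_nonneg_left e2 (sq_nonneg (‖1 + p t‖ - 1))
      have e4 : (‖p t‖ ^ 2) ^ 2 ≤ ‖p t‖ ^ 2 * (1/4) := by
        rw [sq (‖p t‖ ^ 2)]; exact mul_le_mul_of_nonneg_left hb (sq_nonneg _)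
      nlinarith [sq_nonneg ((p t).re + ‖p t‖ ^ 2)]
    have := integral_mono (hint (by fun_prop)) (hint (by fun_prop)) hpt (μ := μ)
    rw [integral_add (hint (by fun_prop)) (hint cre2), integral_const_mul, integral_const_mul,
      r2, ← hx, ← hDd] at this
    nlinarith
  · have hLp : 0 < L := by linarith
    have hpt : ∀ t, 2 * (p t).re + ‖p t‖ ^ 2 ≤ 1 / (8 * L) + (8 * L + 1) * ρ (p t) ^ 2 := by
      intro t
      have hk := key (p t)
      unfold ρ
      rw [sq_abs]
      set r := ‖1 + p t‖ - 1 with hr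
      have : 2 * r ≤ 1 / (8 * L) + 8 * L * r ^ 2 := by
        have : 1 / (8 * L) + 8 * L * r ^ 2 - 2 * r = (8 * L) * (1 / (8 * L) - r) ^ 2 := by
          field_simp
          ring
        have h' : 0 ≤ (8 * L) * (1 / (8 * L) - r) ^ 2 := by positivity
        linarith
      have e : ‖1 + p t‖ = 1 + r := by rw [hr]; ring
      rw [e] at hk
      nlinarith
    have := integral_mono (hint (by fun_prop)) (hint (by fun_prop)) hpt (μ := μ)
    rw [integral_add (hint (by fun_prop)) (hint cn), integral_add (hint (by fun_prop))
      (hint (by fun_prop)), integral_const_mul, integral_const_mul,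
      r1, ← hx, ← hDd] at this
    simp at this
    have h8 : L⁻¹ * 8⁻¹ ≤ x / 2 := by
      rw [← mul_inv, inv_le_iff_one_le_mul₀ (by positivity)]
      nlinarith
    nlinarith

instance factTwoPi : Fact (0 < 2 * Real.pi) := ⟨by positivity⟩

lemma int_fourier (n : ℤ) (hn : n ≠ 0) :
    ∫ t : AddCircle (2 * Real.pi), (fourier n t : ℂ) ∂AddCircle.haarAddCircle = 0 := by
  have h := fourierCoeff_fourier (T := 2 * Real.pi) n
  have := congrFun h 0
  simpa [fourierCoeff, hn, Pi.single_apply, hn.symm] using this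

lemma circ (E : Finset ℕ) (hE : ∀ n ∈ E, 1 ≤ n) (c : ℕ → ℂ) :
    ∫ t : AddCircle (2 * Real.pi), ‖∑ n ∈ E, (fourier n t : ℂ) * c n‖ ^ 2
        ∂AddCircle.haarAddCircle
      ≤ 144 * E.card * ∫ t : AddCircle (2 * Real.pi),
        ρ (∑ n ∈ E, (fourier n t : ℂ) * c n) ^ 2 ∂AddCircle.haarAddCircle := by
  rcases E.eq_empty_or_nonempty with rfl | hne
  · simp
  have hintc : ∀ {f : AddCircle (2 * Real.pi) → ℂ}, Continuous f →
      Integrable f AddCircle.haarAddCircle := fun hf =>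
    hf.integrable_of_hasCompactSupport (HasCompactSupport.of_compactSpace _)
  apply circ_core
  · fun_prop
  · exact_mod_cast hne.card_pos
  · rw [integral_finsetSum _ fun i _ => hintc (by fun_prop)]
    apply Finset.sum_eq_zero
    intro n hn
    rw [integral_mul_const, int_fourier _ (by have := hE n hn; omega), zero_mul]
  · have : ∀ t : AddCircle (2 * Real.pi), (∑ n ∈ E, (fourier n t : ℂ) * c n) ^ 2 =
      ∑ n ∈ E, ∑ m ∈ E, (fourier ((n : ℤ) + m) t : ℂ) * (c n * c m) := by
      intro t
      rw [sq, Finset.sum_mul_sum]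
      refine Finset.sum_congr rfl fun n _ => Finset.sum_congr rfl fun m _ => ?_
      rw [fourier_add]; ring
    simp_rw [this]
    rw [integral_finsetSum _ fun i _ => hintc (by fun_prop)]
    apply Finset.sum_eq_zero
    intro n hn
    rw [integral_finsetSum _ fun i _ => hintc (by fun_prop)]
    apply Finset.sum_eq_zero
    intro m hm
    rw [integral_mul_const, int_fourier _ (by have := hE n hn; omega), zero_mul]
  · have par : ∫ t : AddCircle (2 * Real.pi), ‖∑ n ∈ E, (fourier n t : ℂ) * c n‖ ^ 2
        ∂AddCircle.haarAddCircle = ∑ n ∈ E, ‖c n‖ ^ 2 := by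
      have : ∀ t : AddCircle (2 * Real.pi),
          ((‖∑ n ∈ E, (fourier n t : ℂ) * c n‖ ^ 2 : ℝ) : ℂ) =
          ∑ n ∈ E, ∑ m ∈ E, (fourier ((n : ℤ) + -m) t : ℂ) * (c n * (starRingEnd ℂ) (c m)) := by
        intro t
        rw [Complex.ofReal_pow, ← Complex.mul_conj', map_sum, Finset.sum_mul_sum]
        refine Finset.sum_congr rfl fun n _ => Finset.sum_congr rfl fun m _ => ?_
        rw [fourier_add, fourier_neg, map_mul]; ring
      apply Complex.ofReal_injective
      rw [← integral_complex_ofReal]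
      simp_rw [this]
      rw [integral_finsetSum _ fun i _ => hintc (by fun_prop), Complex.ofReal_sum]
      refine Finset.sum_congr rfl fun n hn => ?_
      rw [integral_finsetSum _ fun i _ => hintc (by fun_prop), Finset.sum_eq_single n]
      · rw [integral_mul_const]
        simp [Complex.mul_conj']
      · intro m _ hm
        rw [integral_mul_const, int_fourier _ (by omega), zero_mul]
      · intro h; exact absurd hn h
    intro t
    rw [par]
    calc ‖∑ n ∈ E, (fourier n t : ℂ) * c n‖ ^ 2 ≤ (∑ n ∈ E, ‖c n‖) ^ 2 := by
          gcongr
          refine (norm_sum_le _ _).trans (le_of_eq ?_)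
          refine Finset.sum_congr rfl fun n _ => ?_
          rw [norm_mul, fourier_apply, Circle.norm_coe, one_mul]
      _ ≤ _ := sq_sum_le_card_mul_sum_sq

lemma l2_meas {d : ℕ} : Measurable fun z : Fin d → ℂ => (l2norm z)⁻¹ • z := by
  unfold l2norm; fun_prop

lemma sphere_rot {d : ℕ} (u : Circle) (F : (Fin d → ℂ) → ENNReal) (hF : Measurable F) :
    ∫⁻ ω, F ((u : ℂ) • ω) ∂(sphereMeasure d) = ∫⁻ ω, F ω ∂(sphereMeasure d) := by
  have mp : MeasurePreserving (fun z : Fin d → ℂ => (u : ℂ) • z) volume volume := by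
    have := volume_preserving_pi (fun _ : Fin d => (rotation u).measurePreserving)
    exact this
  have hFu : Measurable fun ω : Fin d → ℂ => F ((u : ℂ) • ω) :=
    hF.comp (measurable_const_smul _)
  unfold sphereMeasure gaussianCd
  have hg : Measurable fun z : Fin d → ℂ =>
      ENNReal.ofReal ((1 / Real.pi ^ d) * Real.exp (-∑ q, ‖z q‖ ^ 2)) := by fun_prop
  have hF1 : Measurable fun z : Fin d → ℂ => F ((l2norm z)⁻¹ • z) := hF.comp l2_meas
  have hF2 : Measurable fun z : Fin d → ℂ => F ((u : ℂ) • (l2norm z)⁻¹ • z) :=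
    hFu.comp l2_meas
  rw [lintegral_map hF l2_meas, lintegral_map hFu l2_meas,
    lintegral_withDensity_eq_lintegral_mul _ hg hF1,
    lintegral_withDensity_eq_lintegral_mul _ hg hF2,
    ← mp.lintegral_comp (hg.mul hF1)]
  apply lintegral_congr
  intro z
  have hu : ‖(u : ℂ)‖ = 1 := Circle.norm_coe u
  have : l2norm ((u : ℂ) • z) = l2norm z := by simp [l2norm, hu]
  simp only [Pi.mul_apply, this]
  rw [smul_comm]
  simp [hu]

lemma eval_rot {d : ℕ} (q : MvPolynomial (Fin d) ℂ) (n : ℕ) (hq : q.IsHomogeneous n) (u : ℂ)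
    (ω : Fin d → ℂ) : MvPolynomial.eval (u • ω) q = u ^ n * MvPolynomial.eval ω q := by
  rw [MvPolynomial.eval_eq, MvPolynomial.eval_eq, Finset.mul_sum]
  refine Finset.sum_congr rfl fun m hm => ?_
  have := hq (MvPolynomial.mem_support_iff.1 hm)
  rw [Finsupp.weight_apply, Finsupp.sum] at this
  simp only [Pi.smul_apply, smul_eq_mul, mul_pow, Finset.prod_mul_distrib, Finset.prod_pow_eq_pow_sum]
  simp at this
  rw [this]; ring

lemma avg {d : ℕ} (F : (Fin d → ℂ) → ENNReal) (hF : Measurable F) :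
    ∫⁻ ω, F ω ∂(sphereMeasure d) = ∫⁻ ω, ∫⁻ t : AddCircle (2 * Real.pi),
      F ((AddCircle.toCircle t : ℂ) • ω) ∂AddCircle.haarAddCircle ∂(sphereMeasure d) := by
  have : SFinite (sphereMeasure d) := by unfold sphereMeasure gaussianCd; infer_instance
  rw [lintegral_lintegral_swap]
  · simp_rw [sphere_rot _ F hF]
    simp
  · apply Measurable.aemeasurable
    apply hF.comp
    have : Continuous fun x : (Fin d → ℂ) × AddCircle (2 * Real.pi) =>
        (AddCircle.toCircle x.2 : ℂ) • x.1 := by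
      have := (AddCircle.continuous_toCircle (T := 2 * Real.pi))
      fun_prop
    exact this.measurable

/-- **Lifted local circle estimate.** Let `E ⊂ ℤ_{≥1}` be finite with `|E| = L`, and let
`P = Σ_{n ∈ E} G_n` where each `G_n` is (the restriction to `S^{2d−1}` of) a homogeneous
holomorphic polynomial of degree `n` on `ℂ^d`. Then
`‖P‖²_{L²(S^{2d−1})} ≤ 144 L ‖ρ ∘ P‖²_{L²(S^{2d−1})}`. -/
theorem stmt16 (d : ℕ) (hd : 1 ≤ d) (E : Finset ℕ) (hE : ∀ n ∈ E, 1 ≤ n)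
    (G : ℕ → MvPolynomial (Fin d) ℂ) (hG : ∀ n ∈ E, (G n).IsHomogeneous n) :
    (∫ ω, ‖∑ n ∈ E, MvPolynomial.eval ω (G n)‖ ^ 2 ∂(sphereMeasure d))
      ≤ 144 * E.card *
        ∫ ω, (ρ (∑ n ∈ E, MvPolynomial.eval ω (G n))) ^ 2 ∂(sphereMeasure d) := by
  set P : (Fin d → ℂ) → ℂ := fun ω => ∑ n ∈ E, MvPolynomial.eval ω (G n) with hP
  have cP : Continuous P := continuous_finsetSum _ fun n _ => MvPolynomial.continuous_eval _
  have cn : Continuous fun ω => ‖P ω‖ ^ 2 := by fun_prop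
  have cρ : Continuous fun ω => ρ (P ω) ^ 2 := by unfold ρ; fun_prop
  change ∫ ω, ‖P ω‖ ^ 2 ∂(sphereMeasure d) ≤ 144 * E.card * ∫ ω, ρ (P ω) ^ 2 ∂(sphereMeasure d)
  by_cases hi : Integrable (fun ω => ‖P ω‖ ^ 2) (sphereMeasure d)
  swap
  · rw [integral_undef hi]
    exact mul_nonneg (by positivity) (integral_nonneg fun _ => sq_nonneg _)
  have hiρ : Integrable (fun ω => ρ (P ω) ^ 2) (sphereMeasure d) := by
    refine hi.mono' cρ.aestronglyMeasurable (Filter.Eventually.of_forall fun ω => ?_)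
    rw [Real.norm_of_nonneg (sq_nonneg _)]
    unfold ρ
    gcongr
    have := abs_norm_sub_norm_le (1 + P ω) 1
    simpa using this
  rw [← ENNReal.ofReal_le_ofReal_iff (mul_nonneg (by positivity) (integral_nonneg fun _ => sq_nonneg _)),
    ENNReal.ofReal_mul (by positivity),
    ofReal_integral_eq_lintegral_ofReal hi (Filter.Eventually.of_forall fun _ => sq_nonneg _),
    ofReal_integral_eq_lintegral_ofReal hiρ (Filter.Eventually.of_forall fun _ => sq_nonneg _),
    avg _ cn.measurable.ennreal_ofReal, avg _ cρ.measurable.ennreal_ofReal,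
    ← lintegral_const_mul' _ _ ENNReal.ofReal_ne_top]
  apply lintegral_mono
  intro ω
  have hrot : ∀ t : AddCircle (2 * Real.pi), P ((AddCircle.toCircle t : ℂ) • ω) =
      ∑ n ∈ E, (fourier n t : ℂ) * MvPolynomial.eval ω (G n) := by
    intro t
    refine Finset.sum_congr rfl fun n hn => ?_
    rw [eval_rot _ n (hG n hn)]
    simp [fourier_apply, AddCircle.toCircle_nsmul]
  have hint : ∀ {f : AddCircle (2 * Real.pi) → ℝ}, Continuous f →
      Integrable f AddCircle.haarAddCircle := fun hf =>
    hf.integrable_of_hasCompactSupport (HasCompactSupport.of_compactSpace _)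
  have := circ E hE (fun n => MvPolynomial.eval ω (G n))
  simp only [hrot]
  rw [← ofReal_integral_eq_lintegral_ofReal (hint (by fun_prop))
      (Filter.Eventually.of_forall fun _ => sq_nonneg _),
    ← ofReal_integral_eq_lintegral_ofReal (hint (by unfold ρ; fun_prop))
      (Filter.Eventually.of_forall fun _ => sq_nonneg _), ← ENNReal.ofReal_mul (by positivity)]
  exact ENNReal.ofReal_le_ofReal this
end

section
/- Fix d ≥ 1. Let N, L ≥ 1 be integers satisfying 1343 L² ≤ N², and let P(ω) = Σ_{m=0}^{L−1} G_{N+m}(ω), where each G_{N+m} is the restriction to the unit sphere S^{2d−1} ⊂ ℂ^d of a homogeneous holomorphic polynomial of degree N+m on ℂ^d. Then ‖P‖_{L²(S^{2d−1})}² ≤ 32 ‖ρ ∘ P‖_{L²(S^{2d−1})}², where the L² norms are with respect to the normalized surface measure on S^{2d−1}. -/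
open MeasureTheory

lemma aux_l2norm_smul {d : ℕ} (c : ℂ) (hc : ‖c‖ = 1) (z : Fin d → ℂ) :
    l2norm (c • z) = l2norm z := by
  simp [l2norm, hc]

lemma aux_norm_le {d : ℕ} (z : Fin d → ℂ) : ‖(l2norm z)⁻¹ • z‖ ≤ 1 := by
  have h0 : 0 ≤ l2norm z := Real.sqrt_nonneg _
  rw [pi_norm_le_iff_of_nonneg zero_le_one]
  intro q
  have h1 : ‖z q‖ ≤ l2norm z := by
    apply Real.le_sqrt_of_sq_le
    exact Finset.single_le_sum (f := fun q => ‖z q‖ ^ 2) (fun _ _ => by positivity)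
      (Finset.mem_univ q)
  rw [Pi.smul_apply, norm_smul, norm_inv, Real.norm_of_nonneg h0]
  calc (l2norm z)⁻¹ * ‖z q‖ ≤ (l2norm z)⁻¹ * l2norm z := by gcongr
    _ ≤ 1 := inv_mul_le_one

lemma aux_meas_normalize (d : ℕ) :
    Measurable (fun z : Fin d → ℂ => (l2norm z)⁻¹ • z) := by
  have : Measurable (fun z : Fin d → ℂ => l2norm z) := by
    unfold l2norm
    fun_prop
  exact this.inv.smul measurable_id

lemma aux_finite_gaussian (d : ℕ) : IsFiniteMeasure (gaussianCd d) := by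
  unfold gaussianCd
  apply isFiniteMeasure_withDensity_ofReal
  have h1 : Integrable (fun z : ℂ => Real.exp (-‖z‖ ^ 2)) := by
    have := (GaussianFourier.integrable_cexp_neg_mul_sq_norm_add (V := ℂ) (b := 1)
      (by simp) 0 0).norm
    refine this.congr (Filter.Eventually.of_forall fun z => ?_)
    simp [Complex.norm_exp, ← Complex.ofReal_pow]
  have h2 := Integrable.fintype_prod (ι := Fin d) (μ := fun _ => (volume : Measure ℂ))
    (f := fun _ z => Real.exp (-‖z‖ ^ 2)) (fun _ => h1)
  have h3 := (h2.const_mul (1 / Real.pi ^ d))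
  refine (Integrable.congr h3 (Filter.Eventually.of_forall fun z => ?_)).2
  simp [← Real.exp_sum, Finset.sum_neg_distrib]

lemma aux_finite (d : ℕ) : IsFiniteMeasure (sphereMeasure d) := by
  have := aux_finite_gaussian d
  unfold sphereMeasure
  infer_instance

lemma aux_mp_gaussian (d : ℕ) (c : ℂ) (hc : ‖c‖ = 1) :
    MeasurePreserving (fun z : Fin d → ℂ => c • z) (gaussianCd d) (gaussianCd d) := by
  have h1 : MeasurePreserving (fun z : ℂ => c * z) volume volume := by
    have := (rotation (⟨c, by simp [Submonoid.unitSphere, hc]⟩ : Circle)).measurePreserving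
    exact this
  have h2 : MeasurePreserving (fun z : Fin d → ℂ => c • z) volume volume :=
    volume_preserving_pi (fun _ : Fin d => h1)
  refine ⟨h2.measurable, ?_⟩
  ext s hs
  unfold gaussianCd
  rw [Measure.map_apply h2.measurable hs, withDensity_apply _ (h2.measurable hs),
    withDensity_apply _ hs, ← h2.setLIntegral_comp_preimage hs (by fun_prop)]
  simp [hc]

lemma aux_mp (d : ℕ) (c : ℂ) (hc : ‖c‖ = 1) :
    MeasurePreserving (fun z : Fin d → ℂ => c • z) (sphereMeasure d) (sphereMeasure d) := by
  have h := aux_mp_gaussian d c hc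
  have hm := aux_meas_normalize d
  refine ⟨h.measurable, ?_⟩
  unfold sphereMeasure
  rw [Measure.map_map h.measurable hm]
  conv_rhs => rw [← h.map_eq]
  rw [Measure.map_map hm h.measurable]
  congr 1
  funext z
  simp only [Function.comp, aux_l2norm_smul c hc]
  rw [smul_comm]

lemma aux_integral (d : ℕ) (c : ℂ) (hc : ‖c‖ = 1) {E : Type*} [NormedAddCommGroup E]
    [NormedSpace ℝ E] [SecondCountableTopology E]
    (f : (Fin d → ℂ) → E) (hf : Continuous f) :
    ∫ ω, f (c • ω) ∂(sphereMeasure d) = ∫ ω, f ω ∂(sphereMeasure d) := by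
  have h := aux_mp d c hc
  conv_rhs => rw [← h.map_eq]
  rw [integral_map h.measurable.aemeasurable hf.aestronglyMeasurable]

lemma aux_integrable (d : ℕ) {E : Type*} [NormedAddCommGroup E]
    [SecondCountableTopology E] (f : (Fin d → ℂ) → E) (hf : Continuous f) :
    Integrable f (sphereMeasure d) := by
  have := aux_finite d
  obtain ⟨C, hC⟩ := (isCompact_closedBall (0 : Fin d → ℂ) 1).exists_bound_of_continuousOn
    hf.continuousOn
  refine Integrable.of_bound hf.aestronglyMeasurable C ?_
  unfold sphereMeasure
  rw [ae_map_iff (aux_meas_normalize d).aemeasurable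
    (measurableSet_le hf.norm.measurable measurable_const)]
  exact Filter.Eventually.of_forall fun z => hC _ (by simpa using aux_norm_le z)

lemma aux_hom {d n : ℕ} (p : MvPolynomial (Fin d) ℂ) (hp : p.IsHomogeneous n) (c : ℂ)
    (z : Fin d → ℂ) : MvPolynomial.eval (c • z) p = c ^ n * MvPolynomial.eval z p := by
  rw [MvPolynomial.eval_eq, MvPolynomial.eval_eq, Finset.mul_sum]
  refine Finset.sum_congr rfl fun m hm => ?_
  have h := hp (MvPolynomial.mem_support_iff.mp hm)
  have h2 : ∑ i ∈ m.support, m i = n := by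
    rw [← h, Finsupp.weight_apply]
    simp [Finsupp.sum]
  simp only [Pi.smul_apply, smul_eq_mul, mul_pow, Finset.prod_mul_distrib,
    Finset.prod_pow_eq_pow_sum, h2]
  ring

open ComplexConjugate in
lemma aux_orth (d a b : ℕ) (hab : a ≠ b) (A B : (Fin d → ℂ) → ℂ) (hA : Continuous A)
    (hB : Continuous B) (hAh : ∀ c z, A (c • z) = c ^ a * A z)
    (hBh : ∀ c z, B (c • z) = c ^ b * B z) :
    ∫ ω, A ω * conj (B ω) ∂(sphereMeasure d) = 0 := by
  have hab' : (a : ℂ) - b ≠ 0 := sub_ne_zero.mpr (by exact_mod_cast hab)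
  set t : ℝ := Real.pi / ((a : ℝ) - b) with ht
  set c : ℂ := Complex.exp (t * Complex.I) with hc
  have hc1 : ‖c‖ = 1 := Complex.norm_exp_ofReal_mul_I t
  have key : c ^ a * conj (c ^ b) = -1 := by
    rw [map_pow, hc, ← Complex.exp_conj, ← Complex.exp_nat_mul, ← Complex.exp_nat_mul,
      ← Complex.exp_add, ← Complex.exp_pi_mul_I]
    congr 1
    simp only [map_mul, Complex.conj_ofReal, Complex.conj_I, ht]
    push_cast
    field_simp
    ring
  have h := aux_integral d c hc1 (fun ω => A ω * conj (B ω))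
    (hA.mul (Complex.continuous_conj.comp hB))
  have h2 : ∀ ω, A (c • ω) * conj (B (c • ω)) = -(A ω * conj (B ω)) := by
    intro ω
    rw [hAh, hBh, map_mul, mul_mul_mul_comm, key]
    ring
  simp only [h2] at h
  rw [integral_neg] at h
  have h3 := neg_eq_iff_add_eq_zero.mp h
  rw [← two_mul] at h3
  simpa using h3

open ComplexConjugate in
lemma aux_pyth (d N L : ℕ) (A : ℕ → (Fin d → ℂ) → ℂ) (hA : ∀ m, Continuous (A m))
    (hAh : ∀ m ∈ Finset.range L, ∀ c z, A m (c • z) = c ^ (N + m) * A m z) (b : ℕ → ℂ) :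
    ∫ ω, ‖∑ m ∈ Finset.range L, b m * A m ω‖ ^ 2 ∂(sphereMeasure d)
      = ∑ m ∈ Finset.range L, ‖b m‖ ^ 2 * ∫ ω, ‖A m ω‖ ^ 2 ∂(sphereMeasure d) := by
  have hcc : ∀ m, Continuous fun ω => conj (A m ω) :=
    fun m => Complex.continuous_conj.comp (hA m)
  apply Complex.ofReal_injective
  rw [← integral_complex_ofReal]
  push_cast
  have e : ∀ ω, (‖∑ m ∈ Finset.range L, b m * A m ω‖ : ℂ) ^ 2
      = ∑ m ∈ Finset.range L, ∑ n ∈ Finset.range L,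
        b m * conj (b n) * (A m ω * conj (A n ω)) := by
    intro ω
    rw [← Complex.mul_conj', map_sum, Finset.sum_mul_sum]
    refine Finset.sum_congr rfl fun m _ => Finset.sum_congr rfl fun n _ => ?_
    rw [map_mul]; ring
  simp only [e]
  rw [integral_finsetSum _ (fun m _ => aux_integrable d _ (by
    have := hA; fun_prop))]
  refine Finset.sum_congr rfl fun m hm => ?_
  rw [integral_finsetSum _ (fun n _ => aux_integrable d _ (by
    have := hA; fun_prop))]
  rw [Finset.sum_eq_single m]
  · rw [integral_const_mul, Complex.mul_conj', ← integral_complex_ofReal]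
    congr 2
    funext ω
    rw [Complex.mul_conj']
    push_cast
    rfl
  · intro n hn hnm
    rw [integral_const_mul, aux_orth d (N + m) (N + n) (by omega) _ _ (hA m) (hA n)
      (hAh m hm) (hAh n hn), mul_zero]
  · intro h; exact absurd hm h

lemma aux_rho_cont : Continuous ρ := by
  unfold ρ; fun_prop

lemma aux_rho_lower (w : ℂ) :
    (2 * w.re + ‖w‖ ^ 2) ^ 2 ≤ (2 + ‖w‖) ^ 2 * ρ w ^ 2 := by
  have h1 : ‖1 + w‖ ^ 2 = 1 + 2 * w.re + ‖w‖ ^ 2 := by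
    rw [← Complex.normSq_eq_norm_sq, ← Complex.normSq_eq_norm_sq, Complex.normSq_apply,
      Complex.normSq_apply]
    simp; ring
  have h2 : ‖1 + w‖ ≤ 1 + ‖w‖ := by simpa using norm_add_le 1 w
  have h3 : 2 * w.re + ‖w‖ ^ 2 = (‖1 + w‖ + 1) * (‖1 + w‖ - 1) := by linear_combination -h1
  rw [h3, mul_pow]
  unfold ρ
  rw [sq_abs]
  refine mul_le_mul_of_nonneg_right ?_ (sq_nonneg _)
  exact pow_le_pow_left₀ (by positivity) (by linarith) 2

lemma aux_rho_four (w : ℂ) :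
    4 / 3 * ‖w‖ ^ 2 ≤ ∑ k ∈ Finset.range 4, ρ (Complex.I ^ k * w) ^ 2 := by
  have h : ∀ k, (2 * (Complex.I ^ k * w).re + ‖w‖ ^ 2) ^ 2
      ≤ (2 + ‖w‖) ^ 2 * ρ (Complex.I ^ k * w) ^ 2 := by
    intro k
    simpa using aux_rho_lower (Complex.I ^ k * w)
  have hr : ‖w‖ ^ 2 = w.re ^ 2 + w.im ^ 2 := by
    rw [← Complex.normSq_eq_norm_sq, Complex.normSq_apply]; ring
  have h0 := h 0
  have h1 := h 1
  have h2 := h 2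
  have h3 := h 3
  have hs := Finset.sum_le_sum (fun k (_ : k ∈ Finset.range 4) => h k)
  rw [← Finset.mul_sum] at hs
  have e : ∑ k ∈ Finset.range 4, (2 * (Complex.I ^ k * w).re + ‖w‖ ^ 2) ^ 2
      = 8 * ‖w‖ ^ 2 + 4 * (‖w‖ ^ 2) ^ 2 := by
    simp [Finset.sum_range_succ, pow_succ]
    linear_combination (-8) * hr
  rw [e] at hs
  have hn : 0 ≤ ‖w‖ := norm_nonneg w
  refine le_of_mul_le_mul_left (le_trans ?_ hs) (by positivity : 0 < (2 + ‖w‖) ^ 2)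
  nlinarith [mul_nonneg (sq_nonneg ‖w‖) (sq_nonneg (‖w‖ - 1))]

lemma aux_rho_lip (u v : ℂ) : ρ u ^ 2 ≤ 2 * ρ v ^ 2 + 2 * ‖v - u‖ ^ 2 := by
  have h : |‖1 + u‖ - ‖1 + v‖| ≤ ‖v - u‖ := by
    have := abs_norm_sub_norm_le (1 + v) (1 + u)
    rw [abs_sub_comm]
    simpa using this
  have h2 : (‖1 + u‖ - ‖1 + v‖) ^ 2 ≤ ‖v - u‖ ^ 2 := by
    rw [← sq_abs]; gcongr
  unfold ρ
  rw [sq_abs, sq_abs]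
  nlinarith [sq_nonneg ((‖1 + u‖ - ‖1 + v‖) - (‖1 + v‖ - 1))]

lemma aux_coef (N L : ℕ) (hN : 1 ≤ N) (hNL : 1343 * L ^ 2 ≤ N ^ 2) (k m : ℕ) (hk : k < 4)
    (hm : m < L) :
    ‖(Complex.exp (Complex.I * (Real.pi / (2 * N) : ℝ)) ^ k) ^ (N + m) - Complex.I ^ k‖ ^ 2
      ≤ 1 / 50 := by
  have hN' : (N : ℂ) ≠ 0 := by exact_mod_cast (by omega : N ≠ 0)
  have hNr : (0 : ℝ) < N := by exact_mod_cast hN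
  have e1 : Complex.exp (Complex.I * (Real.pi / (2 * N) : ℝ)) ^ N = Complex.I := by
    rw [← Complex.exp_nat_mul]
    conv_rhs => rw [← Complex.exp_pi_div_two_mul_I]
    congr 1
    push_cast
    field_simp
  have e2 : (Complex.exp (Complex.I * (Real.pi / (2 * N) : ℝ)) ^ k) ^ (N + m) - Complex.I ^ k
      = Complex.I ^ k *
        (Complex.exp (Complex.I * ((k * m * (Real.pi / (2 * N)) : ℝ))) - 1) := by
    have e3 : Complex.exp (Complex.I * ((k * m * (Real.pi / (2 * N)) : ℝ)))
        = Complex.exp (Complex.I * (Real.pi / (2 * N) : ℝ)) ^ (k * m) := by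
      rw [← Complex.exp_nat_mul]
      congr 1
      push_cast
      ring
    rw [e3, mul_sub, mul_one]
    congr 1
    generalize Complex.exp (Complex.I * (Real.pi / (2 * N) : ℝ)) = x at e1
    rw [← e1]
    ring
  rw [e2, norm_mul, norm_pow, Complex.norm_I, one_pow, one_mul]
  have h1 := Real.norm_exp_I_mul_ofReal_sub_one_le (x := k * m * (Real.pi / (2 * N)))
  have hpi := Real.pi_pos
  rw [Real.norm_of_nonneg (by positivity)] at h1
  have hk' : (k : ℝ) ≤ 3 := by exact_mod_cast (by omega : k ≤ 3)
  have hm' : (m : ℝ) ≤ L := by exact_mod_cast hm.le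
  have h2 : (k : ℝ) * m * (Real.pi / (2 * N)) ≤ 3 * L * (3.15 / (2 * N)) := by
    have := Real.pi_lt_d2.le
    gcongr
  have hNL' : (1343 : ℝ) * L ^ 2 ≤ N ^ 2 := by exact_mod_cast hNL
  calc _ ≤ (3 * L * (3.15 / (2 * N)) : ℝ) ^ 2 := by
        gcongr; exact h1.trans h2
    _ = (22.325625 * L ^ 2) / N ^ 2 := by field_simp; ring
    _ ≤ 1 / 50 := by
      rw [div_le_div_iff₀ (by positivity) (by norm_num)]
      nlinarith [sq_nonneg (L : ℝ)]

/-- **Lifted high-frequency estimate.** Let `N, L ≥ 1` satisfy `1343 L² ≤ N²`, and let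
`P = Σ_{m=0}^{L−1} G_{N+m}` where each `G_{N+m}` is (the restriction to `S^{2d−1}` of) a
homogeneous holomorphic polynomial of degree `N+m` on `ℂ^d`. Then
`‖P‖²_{L²(S^{2d−1})} ≤ 32 ‖ρ ∘ P‖²_{L²(S^{2d−1})}`. -/
theorem stmt17 (d : ℕ) (hd : 1 ≤ d) (N L : ℕ) (hN : 1 ≤ N) (hL : 1 ≤ L)
    (hNL : 1343 * L ^ 2 ≤ N ^ 2)
    (G : ℕ → MvPolynomial (Fin d) ℂ)
    (hG : ∀ m ∈ Finset.range L, (G (N + m)).IsHomogeneous (N + m)) :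
    (∫ ω, ‖∑ m ∈ Finset.range L, MvPolynomial.eval ω (G (N + m))‖ ^ 2 ∂(sphereMeasure d))
      ≤ 32 * ∫ ω, (ρ (∑ m ∈ Finset.range L, MvPolynomial.eval ω (G (N + m)))) ^ 2
          ∂(sphereMeasure d) := by
  set μ := sphereMeasure d with hμ
  set A : ℕ → (Fin d → ℂ) → ℂ := fun m ω => MvPolynomial.eval ω (G (N + m)) with hAdef
  have hA : ∀ m, Continuous (A m) := fun m => MvPolynomial.continuous_eval _
  have hAh : ∀ m ∈ Finset.range L, ∀ c z, A m (c • z) = c ^ (N + m) * A m z :=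
    fun m hm c z => aux_hom _ (hG m hm) c z
  set P : (Fin d → ℂ) → ℂ := fun ω => ∑ m ∈ Finset.range L, A m ω with hPdef
  have hP : Continuous P := by fun_prop
  have hρ := aux_rho_cont
  set c : ℂ := Complex.exp (Complex.I * (Real.pi / (2 * N) : ℝ)) with hc
  have hc1 : ‖c‖ = 1 := by
    rw [hc, mul_comm]; exact Complex.norm_exp_ofReal_mul_I _
  have hck : ∀ k : ℕ, ‖c ^ k‖ = 1 := fun k => by rw [norm_pow, hc1, one_pow]
  change ∫ ω, ‖P ω‖ ^ 2 ∂μ ≤ 32 * ∫ ω, ρ (P ω) ^ 2 ∂μ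
  have hnorm : ∫ ω, ‖P ω‖ ^ 2 ∂μ = ∑ m ∈ Finset.range L, ∫ ω, ‖A m ω‖ ^ 2 ∂μ := by
    simpa using aux_pyth d N L A hA hAh (fun _ => 1)
  have hdiff : ∀ k ∈ Finset.range 4,
      ∫ ω, ‖P (c ^ k • ω) - Complex.I ^ k * P ω‖ ^ 2 ∂μ ≤ 1 / 50 * ∫ ω, ‖P ω‖ ^ 2 ∂μ := by
    intro k hk
    have e : ∀ ω, P (c ^ k • ω) - Complex.I ^ k * P ω
        = ∑ m ∈ Finset.range L, ((c ^ k) ^ (N + m) - Complex.I ^ k) * A m ω := by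
      intro ω
      simp only [hPdef, Finset.mul_sum, ← Finset.sum_sub_distrib]
      refine Finset.sum_congr rfl fun m hm => ?_
      rw [hAh m hm]; ring
    simp only [e]
    rw [aux_pyth d N L A hA hAh (fun m => (c ^ k) ^ (N + m) - Complex.I ^ k), hnorm,
      Finset.mul_sum]
    refine Finset.sum_le_sum fun m hm => ?_
    refine mul_le_mul_of_nonneg_right
      (aux_coef N L hN hNL k m (Finset.mem_range.mp hk) (Finset.mem_range.mp hm))
      (integral_nonneg fun _ => by positivity)
  have hpt : ∀ ω, 4 / 3 * ‖P ω‖ ^ 2 ≤ ∑ k ∈ Finset.range 4,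
      (2 * ρ (P (c ^ k • ω)) ^ 2 + 2 * ‖P (c ^ k • ω) - Complex.I ^ k * P ω‖ ^ 2) :=
    fun ω => (aux_rho_four _).trans (Finset.sum_le_sum fun k _ => aux_rho_lip _ _)
  have hint := integral_mono (μ := μ) (aux_integrable d _ (by fun_prop))
    (aux_integrable d _ (by fun_prop)) hpt
  rw [integral_const_mul, integral_finsetSum _ (fun k _ => aux_integrable d _ (by fun_prop))]
    at hint
  have hterm : ∀ k ∈ Finset.range 4, ∫ ω, (2 * ρ (P (c ^ k • ω)) ^ 2
      + 2 * ‖P (c ^ k • ω) - Complex.I ^ k * P ω‖ ^ 2) ∂μ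
      ≤ 2 * ∫ ω, ρ (P ω) ^ 2 ∂μ + 1 / 25 * ∫ ω, ‖P ω‖ ^ 2 ∂μ := by
    intro k hk
    rw [integral_add (aux_integrable d _ (by fun_prop)) (aux_integrable d _ (by fun_prop)),
      integral_const_mul, integral_const_mul,
      aux_integral d (c ^ k) (hck k) (fun ω => ρ (P ω) ^ 2) (by fun_prop)]
    linarith [hdiff k hk]
  have hs := hint.trans (Finset.sum_le_sum hterm)
  rw [Finset.sum_const, Finset.card_range, nsmul_eq_mul] at hs
  push_cast at hs
  have h0 : 0 ≤ ∫ ω, ‖P ω‖ ^ 2 ∂μ := integral_nonneg fun _ => by positivity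
  have h0' : 0 ≤ ∫ ω, ρ (P ω) ^ 2 ∂μ := integral_nonneg fun _ => by positivity
  linarith
end
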